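/- Let n ≥ 1 and let a : Fin n → ℚ with a i ≠ 0 for every i. The diagonal quadratic form ∑ i, a i * (x i)^2 is isotropic over ℚ (has a nonzero rational zero) if and only if it is isotropic over ℝ (there is a nonzero x : Fin n → ℝ with ∑ i, (a i : ℝ) * (x i)^2 = 0) and, for every prime p, it is isotropic over the p-adic field ℚ_p (there is a nonzero x : Fin n → ℚ_p with ∑ i, (a i : ℚ_p) * (x i)^2 = 0). (Hasse–Minkowski principle over ℚ.) -/

import Mathlib

open scoped NumberTheorySymbols
open ZMod (χ₄ χ₈)

/-- The diagonal form with coefficients `a i`, `i ∈ s`, has a nontrivial zero over `K`. -/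
def DiagIsotropic {K ι : Type*} [Field K] (s : Finset ι) (a : ι → K) : Prop :=
  ∃ x : ι → K, (∃ i ∈ s, x i ≠ 0) ∧ ∑ i ∈ s, a i * x i ^ 2 = 0

/-- The equation `x² = a y² + b z²` has a nontrivial solution over `K`. -/
def HilbertSolvable {K : Type*} [Field K] (a b : K) : Prop :=
  ∃ x y z : K, (x ≠ 0 ∨ y ≠ 0 ∨ z ≠ 0) ∧ x ^ 2 = a * y ^ 2 + b * z ^ 2

section Field

variable {K : Type*} [Field K]

namespace HilbertSolvable

theorem symm {a b : K} (h : HilbertSolvable a b) : HilbertSolvable b a := by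
  obtain ⟨x, y, z, h0, h⟩ := h
  exact ⟨x, z, y, by tauto, by rw [h, add_comm]⟩

theorem of_sq_mul {a b c : K} (hc : c ≠ 0) (h : HilbertSolvable (c ^ 2 * a) b) :
    HilbertSolvable a b := by
  obtain ⟨x, y, z, h0, h⟩ := h
  refine ⟨x, c * y, z, ?_, by rw [h]; ring⟩
  simpa [hc] using h0

theorem sq_mul {a b c : K} (hc : c ≠ 0) (h : HilbertSolvable a b) :
    HilbertSolvable (c ^ 2 * a) b := by
  refine of_sq_mul (c := c⁻¹) (inv_ne_zero hc) ?_
  rwa [← mul_assoc, ← mul_pow, inv_mul_cancel₀ hc, one_pow, one_mul]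

theorem of_isSquare {a : K} (b : K) (h : IsSquare a) : HilbertSolvable a b := by
  obtain ⟨r, rfl⟩ := h
  exact ⟨r, 1, 0, by simp, by ring⟩

/-- If `b * b'` is a norm `t² - a`, solvability for `b` implies solvability for `b'`. -/
theorem of_norm {a b b' t : K} (hb : b ≠ 0) (ht : t ^ 2 - a = b * b')
    (h : HilbertSolvable a b) : HilbertSolvable a b' := by
  obtain ⟨x, y, z, h0, h⟩ := h
  by_cases hz : z = 0
  · subst hz
    exact ⟨x, y, 0, h0, by rw [h]; ring⟩
  · refine ⟨x * t + a * y, x + t * y, b * z, Or.inr (Or.inr (mul_ne_zero hb hz)), ?_⟩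
    linear_combination (t ^ 2 - a) * h + b * z ^ 2 * ht

theorem neg_mul_right {a b : K} (ha : a ≠ 0) (h : HilbertSolvable a b) :
    HilbertSolvable a (-(a * b)) := by
  obtain ⟨x, y, z, h0, h⟩ := h
  refine ⟨a * y, x, z, ?_, by rw [h]; ring⟩
  simp only [ne_eq, mul_eq_zero, ha, false_or]
  tauto

end HilbertSolvable

theorem diagIsotropic_triple_iff {ι : Type*} [DecidableEq ι] {i j k : ι} (hij : i ≠ j)
    (hik : i ≠ k) (hjk : j ≠ k) {a : ι → K} (ha : a i ≠ 0) :
    DiagIsotropic {i, j, k} a ↔ HilbertSolvable (-(a i * a j)) (-(a i * a k)) := by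
  constructor
  · rintro ⟨x, h0, h⟩
    rw [Finset.sum_insert (by simp [hij, hik]), Finset.sum_pair hjk] at h
    refine ⟨a i * x i, x j, x k, ?_, by linear_combination a i * h⟩
    simpa [ha] using h0
  · rintro ⟨x, y, z, h0, h⟩
    refine ⟨fun l => if l = i then x / a i else if l = j then y else z, ?_, ?_⟩
    · simpa [hij.symm, hik.symm, hjk.symm, ha] using h0
    · rw [Finset.sum_insert (by simp [hij, hik]), Finset.sum_pair hjk]
      simp only [hij.symm, hik.symm, hjk.symm, if_true, if_false]
      field_simp
      linear_combination h

theorem DiagIsotropic.mono {ι : Type*} {s t : Finset ι} (hst : s ⊆ t) {a : ι → K}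
    (h : DiagIsotropic s a) : DiagIsotropic t a := by
  classical
  obtain ⟨x, ⟨i, hi, hx⟩, h⟩ := h
  refine ⟨fun j => if j ∈ s then x j else 0, ⟨i, hst hi, by simpa [hi] using hx⟩, ?_⟩
  rw [← Finset.sum_subset hst]
  · rw [← h]
    exact Finset.sum_congr rfl fun j hj => by simp [hj]
  · intro j _ hj
    simp [hj]

/-- Isotropy only depends on the square classes of the coefficients. -/
theorem DiagIsotropic.of_sq_mul {ι : Type*} {s : Finset ι} {a b c : ι → K}
    (hc : ∀ i ∈ s, c i ≠ 0) (hab : ∀ i ∈ s, a i = c i ^ 2 * b i)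
    (h : DiagIsotropic s a) : DiagIsotropic s b := by
  obtain ⟨x, ⟨i, hi, hx⟩, h⟩ := h
  refine ⟨fun j => c j * x j, ⟨i, hi, mul_ne_zero (hc i hi) hx⟩, ?_⟩
  rw [← h]
  exact Finset.sum_congr rfl fun j hj => by rw [hab j hj]; ring

/-- A nonzero value represented by a binary form may replace it in a larger form. -/
theorem DiagIsotropic.of_update {ι : Type*} [DecidableEq ι] {s : Finset ι} {i j : ι}
    (hi : i ∈ s) (hj : j ∈ s) (hij : i ≠ j) {a : ι → K} {x y t : K}
    (ht : t = a i * x ^ 2 + a j * y ^ 2) (ht0 : t ≠ 0)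
    (h : DiagIsotropic (s.erase j) (Function.update a i t)) : DiagIsotropic s a := by
  obtain ⟨u, ⟨k, hk, hu⟩, h⟩ := h
  have hsum : ∀ f : ι → K, ∑ l ∈ s, f l = f j + (f i + ∑ l ∈ (s.erase j).erase i, f l) := by
    intro f
    rw [← Finset.add_sum_erase s f hj,
      ← Finset.add_sum_erase (s.erase j) f (Finset.mem_erase.2 ⟨hij, hi⟩)]
  rw [← Finset.add_sum_erase (s.erase j) _ (Finset.mem_erase.2 ⟨hij, hi⟩)] at h
  have hrest : ∀ v : ι → K, (∀ l, l ≠ i → l ≠ j → v l = u l) →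
      ∑ l ∈ (s.erase j).erase i, a l * v l ^ 2 =
        ∑ l ∈ (s.erase j).erase i, Function.update a i t l * u l ^ 2 := by
    intro v hv
    refine Finset.sum_congr rfl fun l hl => ?_
    simp only [Finset.mem_erase] at hl
    rw [Function.update_of_ne hl.1, hv l hl.1 hl.2.1]
  refine ⟨Function.update (Function.update u i (x * u i)) j (y * u i), ?_, ?_⟩
  · by_cases hki : k = i
    · subst hki
      by_cases hx : x = 0
      · refine ⟨j, hj, ?_⟩
        have hy : y ≠ 0 := by
          rintro rfl
          exact ht0 (by rw [ht, hx]; ring)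
        simp [hy, hu]
      · refine ⟨k, hi, ?_⟩
        simp [Function.update_of_ne hij, hx, hu]
    · have hkj := (Finset.mem_erase.1 hk)
      exact ⟨k, hkj.2, by simpa [Function.update_of_ne hkj.1, Function.update_of_ne hki] using hu⟩
  · rw [hsum, hrest _ fun l h1 h2 => by
      rw [Function.update_of_ne h2, Function.update_of_ne h1]]
    simp only [Function.update_self, Function.update_of_ne hij] at h ⊢
    rw [← h, ht]
    ring

theorem exists_binary_eq_of_isotropic [CharZero K] {a b : K} (ha : a ≠ 0) (hb : b ≠ 0) {x y : K}
    (hxy : x ≠ 0 ∨ y ≠ 0) (h : a * x ^ 2 + b * y ^ 2 = 0) (t : K) :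
    ∃ u v : K, a * u ^ 2 + b * v ^ 2 = t := by
  have hx : x ≠ 0 := by
    rintro rfl
    simp_all
  have hy : y ≠ 0 := by
    rintro rfl
    simp_all
  have hb' : b = -a * (x / y) ^ 2 := by
    field_simp
    linear_combination h
  refine ⟨(t / a + 1) / 2, (t / a - 1) / 2 * (y / x), ?_⟩
  rw [hb']
  field_simp
  ring

/-- An isotropic form splits along a binary subform at some nonzero value of the latter. -/
theorem DiagIsotropic.exists_update [CharZero K] {ι : Type*} [DecidableEq ι] {s : Finset ι}
    {i j k : ι} (hi : i ∈ s) (hj : j ∈ s) (hk : k ∈ s) (hij : i ≠ j) (hik : i ≠ k) (hjk : j ≠ k)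
    {a : ι → K} (ha : ∀ l ∈ s, a l ≠ 0) (h : DiagIsotropic s a) :
    ∃ x y : K, a i * x ^ 2 + a j * y ^ 2 ≠ 0 ∧
      DiagIsotropic (s.erase j) (Function.update a i (a i * x ^ 2 + a j * y ^ 2)) := by
  obtain ⟨u, ⟨l, hl, hu⟩, h⟩ := h
  have hie : i ∈ s.erase j := Finset.mem_erase.2 ⟨hij, hi⟩
  have hrest : ∀ (t : K) (v : ι → K), (∀ l, l ≠ i → l ≠ j → v l = u l) →
      ∑ l ∈ (s.erase j).erase i, Function.update a i t l * v l ^ 2 =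
        ∑ l ∈ (s.erase j).erase i, a l * u l ^ 2 := by
    intro t v hv
    refine Finset.sum_congr rfl fun l hl => ?_
    simp only [Finset.mem_erase] at hl
    rw [Function.update_of_ne hl.1, hv l hl.1 hl.2.1]
  rw [← Finset.add_sum_erase s _ hj, ← Finset.add_sum_erase (s.erase j) _ hie] at h
  by_cases ht : a i * u i ^ 2 + a j * u j ^ 2 = 0
  · by_cases hl' : l ≠ i ∧ l ≠ j
    · refine ⟨1, 0, by simpa using ha i hi, Function.update u i 0,
        ⟨l, Finset.mem_erase.2 ⟨hl'.2, hl⟩, by rwa [Function.update_of_ne hl'.1]⟩, ?_⟩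
      rw [← Finset.add_sum_erase (s.erase j) _ hie,
        hrest _ _ fun l h1 _ => Function.update_of_ne h1 _ _]
      simp only [Function.update_self]
      linear_combination h - ht
    · have hne : u i ≠ 0 ∨ u j ≠ 0 := by
        by_cases hli : l = i
        · exact Or.inl (hli ▸ hu)
        · have : l = j := by tauto
          exact Or.inr (this ▸ hu)
      obtain ⟨x, y, hxy⟩ :=
        exists_binary_eq_of_isotropic (ha i hi) (ha j hj) hne ht (-a k)
      refine ⟨x, y, by rw [hxy]; exact neg_ne_zero.2 (ha k hk), ?_⟩
      rw [hxy]
      refine ⟨fun l => if l = i ∨ l = k then 1 else 0, ⟨i, hie, by simp⟩, ?_⟩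
      rw [← Finset.add_sum_erase (s.erase j) _ hie, Finset.sum_eq_single k]
      · simp [Function.update_of_ne hik.symm]
      · intro l hl hlk
        have := (Finset.mem_erase.1 hl).1
        simp [this, hlk]
      · intro hk'
        simp [hik.symm, hjk.symm, hk] at hk'
  · refine ⟨u i, u j, ht, Function.update u i 1, ⟨i, hie, by simp⟩, ?_⟩
    rw [← Finset.add_sum_erase (s.erase j) _ hie,
      hrest _ _ fun l h1 _ => Function.update_of_ne h1 _ _]
    simp only [Function.update_self]
    linear_combination h

end Field

section Padic

variable {p : ℕ} [Fact p.Prime]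

/-- A `p`-adic number sufficiently close to `1` is a square. -/
theorem Padic.isSquare_of_norm_sub_one_lt {u : ℚ_[p]} (h : ‖u - 1‖ < ‖(2 : ℚ_[p])‖ ^ 2) :
    IsSquare u := by
  have h2 : ‖(2 : ℚ_[p])‖ ≤ 1 := by simpa using Padic.norm_int_le_one (p := p) 2
  have hu : ‖u‖ ≤ 1 := by
    have := Padic.nonarchimedean (u - 1) 1
    rw [sub_add_cancel, norm_one] at this
    exact this.trans (max_le (h.le.trans (pow_le_one₀ (norm_nonneg _) h2)) le_rfl)
  obtain ⟨w, rfl⟩ : ∃ w : ℤ_[p], (w : ℚ_[p]) = u := ⟨⟨u, hu⟩, rfl⟩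
  obtain ⟨z, hz, -⟩ := hensels_lemma (p := p) (R := ℤ_[p])
    (F := Polynomial.X ^ 2 - Polynomial.C w) (a := 1) (by
      simp only [map_sub, map_pow, Polynomial.aeval_X, Polynomial.aeval_C, one_pow,
        Polynomial.derivative_X_pow, Polynomial.derivative_C, sub_zero, map_mul]
      rw [norm_sub_rev]
      simp only [PadicInt.norm_def]
      have e : ((2 : ℤ_[p]) : ℚ_[p]) = 2 := rfl
      simpa [e] using h)
  simp only [map_sub, map_pow, Polynomial.aeval_X, Polynomial.aeval_C, Algebra.algebraMap_self,
    RingHom.id_apply, sub_eq_zero] at hz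
  exact ⟨z, by rw [← hz]; push_cast; ring⟩

/-- Numbers close to a given nonzero `p`-adic number lie in its square class. -/
theorem Padic.exists_sq_mul_of_norm_sub_lt {u t : ℚ_[p]} (ht : t ≠ 0)
    (h : ‖u - t‖ < ‖(2 : ℚ_[p])‖ ^ 2 * ‖t‖) : ∃ c : ℚ_[p], c ≠ 0 ∧ u = c ^ 2 * t := by
  have h2 : ‖(2 : ℚ_[p])‖ ≤ 1 := by simpa using Padic.norm_int_le_one (p := p) 2
  have ht' : 0 < ‖t‖ := norm_pos_iff.2 ht
  obtain ⟨c, hc⟩ : IsSquare (u / t) := by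
    apply Padic.isSquare_of_norm_sub_one_lt
    rw [div_sub_one ht, norm_div, div_lt_iff₀ ht']
    exact h
  have hu : u = c ^ 2 * t := by
    rw [sq, ← hc, div_mul_cancel₀ _ ht]
  refine ⟨c, ?_, hu⟩
  rintro rfl
  rw [hu] at h
  have : ‖(2 : ℚ_[p])‖ ^ 2 ≤ 1 := pow_le_one₀ (norm_nonneg _) h2
  simp only [ne_eq, OfNat.ofNat_ne_zero, not_false_eq_true, zero_pow, zero_mul, zero_sub,
    norm_neg] at h
  nlinarith

theorem Padic.norm_two_eq_one (hp : p ≠ 2) : ‖(2 : ℚ_[p])‖ = 1 := by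
  have := Padic.norm_intCast_lt_one_iff (p := p) (k := 2)
  have h2 := Padic.norm_int_le_one (p := p) 2
  refine le_antisymm (by simpa using h2) (not_lt.1 fun h => ?_)
  have hd : (p : ℤ) ∣ 2 := this.1 (by simpa using h)
  have hd' : p ∣ 2 := by exact_mod_cast hd
  exact hp ((Nat.prime_dvd_prime_iff_eq Fact.out Nat.prime_two).1 hd')

theorem Padic.norm_intCast_eq_one {a : ℤ} (ha : ¬ (p : ℤ) ∣ a) : ‖(a : ℚ_[p])‖ = 1 :=
  le_antisymm (Padic.norm_int_le_one a)
    (not_lt.1 fun h => ha (Padic.norm_intCast_lt_one_iff.1 h))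

/-- An integer prime to the odd prime `p` which is a square mod `p` is a `p`-adic square. -/
theorem Padic.isSquare_intCast (hp : p ≠ 2) {a : ℤ} (ha : ¬ (p : ℤ) ∣ a)
    (h : IsSquare (a : ZMod p)) : IsSquare (a : ℚ_[p]) := by
  obtain ⟨r, hr⟩ := h
  obtain ⟨r, rfl⟩ := ZMod.intCast_surjective r
  have hd : (p : ℤ) ∣ a - r ^ 2 := by
    rw [← ZMod.intCast_zmod_eq_zero_iff_dvd]
    push_cast
    rw [hr]
    ring
  have hrp : ¬ (p : ℤ) ∣ r ^ 2 := fun h => ha ((dvd_sub_left h).1 hd)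
  have hr1 := Padic.norm_intCast_eq_one (p := p) hrp
  obtain ⟨c, -, hc⟩ := Padic.exists_sq_mul_of_norm_sub_lt (p := p) (u := (a : ℚ_[p]))
    (t := ((r ^ 2 : ℤ) : ℚ_[p])) (by rw [← norm_pos_iff, hr1]; exact one_pos) (by
      rw [Padic.norm_two_eq_one hp, hr1, ← Int.cast_sub, one_pow, one_mul]
      exact Padic.norm_intCast_lt_one_iff.2 hd)
  exact ⟨c * r, by rw [hc]; push_cast; ring⟩

theorem ZMod.exists_sq_add_sq_eq (hp : p ≠ 2) {a b : ZMod p} (ha : a ≠ 0) (hb : b ≠ 0)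
    (c : ZMod p) : ∃ x y : ZMod p, a * x ^ 2 + b * y ^ 2 + c = 0 := by
  open Polynomial in
  have key := @FiniteField.exists_root_sum_quadratic (ZMod p) _ _ _
    (C a * X ^ 2) (C b * X ^ 2 + C c) (by rw [degree_C_mul_X_pow 2 ha]; rfl) (by
      rw [degree_add_C]
      · rw [degree_C_mul_X_pow 2 hb]; rfl
      · rw [degree_C_mul_X_pow 2 hb]; norm_num) (by
      rw [ZMod.card]
      exact ((Fact.out : p.Prime).eq_two_or_odd).resolve_left hp)
  obtain ⟨x, y, h⟩ := key
  refine ⟨x, y, ?_⟩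
  simp only [Polynomial.eval_add, Polynomial.eval_mul, Polynomial.eval_C, Polynomial.eval_pow,
    Polynomial.eval_X] at h
  rw [← h]
  ring

/-- The conic attached to two `p`-adic unit integers has a point if `p` is odd. -/
theorem HilbertSolvable.of_not_dvd (hp : p ≠ 2) {a b : ℤ} (ha : ¬ (p : ℤ) ∣ a)
    (hb : ¬ (p : ℤ) ∣ b) : HilbertSolvable (a : ℚ_[p]) b := by
  have h0 : ∀ {n : ℤ}, ¬ (p : ℤ) ∣ n → (n : ZMod p) ≠ 0 := fun h =>
    (ZMod.intCast_zmod_eq_zero_iff_dvd _ p).not.2 h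
  obtain ⟨x, y, hxy⟩ := ZMod.exists_sq_add_sq_eq hp (h0 ha) (h0 hb) (-1)
  obtain ⟨x, rfl⟩ := ZMod.intCast_surjective x
  obtain ⟨y, rfl⟩ := ZMod.intCast_surjective y
  have hsq : ∀ m : ℤ, (m : ZMod p) = 1 → IsSquare (m : ℚ_[p]) := by
    intro m hm
    refine Padic.isSquare_intCast hp ?_ (by rw [hm]; exact IsSquare.one)
    rw [← ZMod.intCast_zmod_eq_zero_iff_dvd, hm]
    exact one_ne_zero
  obtain ⟨z, hz⟩ := hsq (a * x ^ 2 + b * y ^ 2) (by push_cast; linear_combination hxy)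
  refine ⟨z, x, y, ?_, by rw [sq, ← hz]; push_cast; ring⟩
  by_contra hcon
  push Not at hcon
  obtain ⟨-, hx, hy⟩ := hcon
  have hx : x = 0 := by exact_mod_cast hx
  have hy : y = 0 := by exact_mod_cast hy
  subst hx hy
  simp at hxy

/-- A `p`-adic point of a conic with integral coefficients yields a primitive integral solution
modulo any power of `p`. -/
theorem HilbertSolvable.exists_int {a b : ℤ} (h : HilbertSolvable (a : ℚ_[p]) b) (n : ℕ) :
    ∃ x y z : ℤ, ¬ ((p : ℤ) ∣ x ∧ (p : ℤ) ∣ y ∧ (p : ℤ) ∣ z) ∧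
      (p : ℤ) ^ n ∣ x ^ 2 - a * y ^ 2 - b * z ^ 2 := by
  classical
  obtain ⟨x, y, z, h0, h⟩ := h
  obtain ⟨c, hc0, hcx, hcy, hcz, hc⟩ : ∃ c : ℚ_[p], c ≠ 0 ∧ ‖x‖ ≤ ‖c‖ ∧ ‖y‖ ≤ ‖c‖ ∧ ‖z‖ ≤ ‖c‖ ∧
      (c = x ∨ c = y ∨ c = z) := by
    obtain ⟨c, hc, hmax⟩ := Finset.exists_max_image ({x, y, z} : Finset ℚ_[p]) (fun c => ‖c‖)
      (by simp)
    simp only [Finset.mem_insert, Finset.mem_singleton, forall_eq_or_imp, forall_eq] at hc hmax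
    refine ⟨c, ?_, hmax.1, hmax.2.1, hmax.2.2, hc⟩
    rintro rfl
    simp only [norm_zero, norm_le_zero_iff] at hmax
    tauto
  have hc' : 0 < ‖c‖ := norm_pos_iff.2 hc0
  have hdiv : ∀ w : ℚ_[p], ‖w‖ ≤ ‖c‖ → ∃ v : ℤ_[p], (v : ℚ_[p]) = w / c := fun w hw =>
    ⟨⟨w / c, by rw [norm_div]; exact (div_le_one hc').2 hw⟩, rfl⟩
  obtain ⟨X, hX⟩ := hdiv x hcx
  obtain ⟨Y, hY⟩ := hdiv y hcy
  obtain ⟨Z, hZ⟩ := hdiv z hcz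
  have hXYZ : X ^ 2 = a * Y ^ 2 + b * Z ^ 2 := by
    have : (X : ℚ_[p]) ^ 2 = a * (Y : ℚ_[p]) ^ 2 + b * (Z : ℚ_[p]) ^ 2 := by
      rw [hX, hY, hZ]
      field_simp
      exact h
    apply PadicInt.ext
    push_cast
    exact this
  have happ : ∀ W : ℤ_[p], ∃ m : ℤ, PadicInt.toZModPow (n + 1) W = m := fun W =>
    ⟨(PadicInt.toZModPow (n + 1) W).valMinAbs, by simp⟩
  obtain ⟨x', hx'⟩ := happ X
  obtain ⟨y', hy'⟩ := happ Y
  obtain ⟨z', hz'⟩ := happ Z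
  have hdvd : ∀ (W : ℤ_[p]) (m : ℤ), PadicInt.toZModPow (n + 1) W = m → (p : ℤ) ∣ m →
      W ≠ 1 := by
    rintro W m hm ⟨k, rfl⟩ rfl
    have h1 : ((p * k - 1 : ℤ) : ZMod (p ^ (n + 1))) = 0 := by
      push_cast at hm ⊢
      rw [← hm, map_one, sub_self]
    rw [ZMod.intCast_zmod_eq_zero_iff_dvd] at h1
    have h2 : (p : ℤ) ∣ p * k - 1 := (Dvd.intro_left (p ^ n : ℤ) (by push_cast; ring)).trans h1
    have h3 : (p : ℤ) ∣ 1 := (dvd_sub_right (Dvd.intro k rfl)).1 h2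
    exact (Nat.prime_iff_prime_int.1 Fact.out).not_dvd_one h3
  refine ⟨x', y', z', ?_, ?_⟩
  · rintro ⟨h1, h2, h3⟩
    rcases hc with rfl | rfl | rfl
    · exact hdvd X x' hx' h1 (PadicInt.ext (by rw [hX, div_self hc0]; rfl))
    · exact hdvd Y y' hy' h2 (PadicInt.ext (by rw [hY, div_self hc0]; rfl))
    · exact hdvd Z z' hz' h3 (PadicInt.ext (by rw [hZ, div_self hc0]; rfl))
  · have h1 : ((x' ^ 2 - a * y' ^ 2 - b * z' ^ 2 : ℤ) : ZMod (p ^ (n + 1))) = 0 := by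
      push_cast
      rw [← hx', ← hy', ← hz', ← map_pow, hXYZ]
      simp only [map_add, map_mul, map_pow, map_intCast]
      ring
    rw [ZMod.intCast_zmod_eq_zero_iff_dvd] at h1
    exact (pow_dvd_pow (p : ℤ) (Nat.le_succ n)).trans (by exact_mod_cast h1)

end Padic

section Ternary

/-- An integer which is a square modulo every prime factor of a squarefree number `n` is a square
modulo `n`. -/
theorem Squarefree.exists_dvd_sq_sub (a : ℤ) (n : ℕ) (hn : Squarefree n)
    (h : ∀ p : ℕ, p.Prime → p ∣ n → ∃ t : ℤ, (p : ℤ) ∣ t ^ 2 - a) :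
    ∃ t : ℤ, (n : ℤ) ∣ t ^ 2 - a := by
  induction n using induction_on_primes with
  | zero => exact absurd hn not_squarefree_zero
  | one => exact ⟨0, by simp⟩
  | prime_mul p m hp ih =>
    have hcop : Nat.Coprime p m := Nat.coprime_of_squarefree_mul hn
    obtain ⟨t₁, k₁, h₁⟩ := h p hp (Dvd.intro m rfl)
    obtain ⟨t₂, k₂, h₂⟩ := ih (hn.squarefree_of_dvd (Dvd.intro_left p rfl))
      fun q hq hqm => h q hq (hqm.mul_left p)
    obtain ⟨u, v, huv⟩ := Nat.isCoprime_iff_coprime.2 hcop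
    refine ⟨t₁ * (v * m) + t₂ * (u * p), ?_⟩
    rw [Nat.cast_mul]
    refine (Nat.isCoprime_iff_coprime.2 hcop).mul_dvd ?_ ?_
    · have hv : v * (m : ℤ) = 1 - u * p := by linear_combination huv
      rw [hv]
      refine ⟨k₁ + (t₂ * u - t₁ * u) * (2 * t₁ + (t₂ * u - t₁ * u) * p), ?_⟩
      linear_combination h₁
    · have hu : u * (p : ℤ) = 1 - v * m := by linear_combination huv
      rw [hu]
      refine ⟨k₂ + (t₁ * v - t₂ * v) * (2 * t₂ + (t₁ * v - t₂ * v) * m), ?_⟩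
      linear_combination h₂

/-- If `p` divides `b` exactly once, a point on the conic makes `a` a square modulo `p`. -/
theorem HilbertSolvable.exists_dvd_sq_sub {p : ℕ} [hp : Fact p.Prime] {a b : ℤ}
    (hb : ¬ (p : ℤ) ^ 2 ∣ b) (hpb : (p : ℤ) ∣ b) (h : HilbertSolvable (a : ℚ_[p]) b) :
    ∃ t : ℤ, (p : ℤ) ∣ t ^ 2 - a := by
  have hpp : Prime (p : ℤ) := Nat.prime_iff_prime_int.1 hp.out
  obtain ⟨x, y, z, h0, hd⟩ := h.exists_int 2
  obtain ⟨c, rfl⟩ := hpb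
  have hd1 : (p : ℤ) ∣ x ^ 2 - a * y ^ 2 := by
    have : (p : ℤ) ∣ x ^ 2 - a * y ^ 2 - p * c * z ^ 2 := (dvd_pow_self _ two_ne_zero).trans hd
    exact (dvd_sub_left (Dvd.intro (c * z ^ 2) (by ring))).1 this
  have hy : ¬ (p : ℤ) ∣ y := by
    intro hy
    have hx : (p : ℤ) ∣ x := by
      refine hpp.dvd_of_dvd_pow (n := 2) ((dvd_sub_left ?_).1 hd1)
      exact (dvd_pow hy two_ne_zero).mul_left a
    refine h0 ⟨hx, hy, ?_⟩
    obtain ⟨x, rfl⟩ := hx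
    obtain ⟨y, rfl⟩ := hy
    have h2 : (p : ℤ) ^ 2 ∣ p * c * z ^ 2 := by
      rw [show (p * x) ^ 2 - a * (p * y) ^ 2 - p * c * z ^ 2 =
        (p : ℤ) ^ 2 * (x ^ 2 - a * y ^ 2) - p * c * z ^ 2 by ring] at hd
      exact (dvd_sub_right (Dvd.intro _ rfl)).1 hd
    rw [sq, mul_assoc] at h2
    have h3 := (mul_dvd_mul_iff_left hpp.ne_zero).1 h2
    rcases hpp.dvd_or_dvd h3 with h4 | h4
    · exact absurd (by rw [sq]; exact mul_dvd_mul_left _ h4) hb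
    · exact hpp.dvd_of_dvd_pow h4
  obtain ⟨u, v, huv⟩ := (Prime.coprime_iff_not_dvd hpp).2 hy
  obtain ⟨k, hk⟩ := hd1
  refine ⟨x * v, k * v ^ 2 + a * (-2 * u + u ^ 2 * p), ?_⟩
  have hv : v * y = 1 - u * p := by linear_combination huv
  linear_combination v ^ 2 * hk + a * (v * y + 1 - u * p) * hv

theorem Int.natAbs_lt_of_sq_sub_eq_mul {a b b' t : ℤ} (hab : a.natAbs ≤ b.natAbs)
    (hb : 2 ≤ b.natAbs) (ht : 2 * t.natAbs ≤ b.natAbs) (h : t ^ 2 - a = b * b') :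
    b'.natAbs < b.natAbs := by
  zify at *
  have h1 : |b| * |b'| ≤ |t| ^ 2 + |a| := by
    rw [← abs_mul, ← h, ← abs_pow]
    exact abs_sub _ _
  have h2 := abs_nonneg t
  by_contra! hcon
  nlinarith [mul_le_mul hcon le_rfl (abs_nonneg b) (abs_nonneg b')]

theorem Int.exists_natAbs_le_dvd_sq_sub {a b t : ℤ} (hb : b ≠ 0) (h : b ∣ t ^ 2 - a) :
    ∃ s : ℤ, 2 * s.natAbs ≤ b.natAbs ∧ b ∣ s ^ 2 - a := by
  refine ⟨t.bmod b.natAbs, ?_, ?_⟩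
  · have h0 : 0 < b.natAbs := Int.natAbs_pos.2 hb
    have h1 := Int.bmod_le (x := t) h0
    have h2 := Int.le_bmod (x := t) h0
    omega
  · have h1 : b ∣ t - t.bmod b.natAbs :=
      (Int.dvd_natAbs.2 dvd_rfl).trans (Int.dvd_self_sub_bmod)
    have h2 : b ∣ t ^ 2 - (t.bmod b.natAbs) ^ 2 := h1.trans (sub_dvd_pow_sub_pow _ _ 2)
    have := dvd_sub h h2
    rwa [sub_sub_sub_cancel_left, ] at this

/-- Legendre's theorem: a conic over `ℚ` with points everywhere locally has a rational point. -/
theorem hilbertSolvable_rat_of_local (a b : ℤ) (ha : a ≠ 0) (hb : b ≠ 0)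
    (hR : HilbertSolvable (a : ℝ) b)
    (hp : ∀ (p : ℕ) [Fact p.Prime], HilbertSolvable (a : ℚ_[p]) b) :
    HilbertSolvable (a : ℚ) b := by
  induction hN : a.natAbs + b.natAbs using Nat.strong_induction_on generalizing a b with
  | _ N ih =>
  subst hN
  wlog hab : a.natAbs ≤ b.natAbs generalizing a b
  · exact (this b a hb ha hR.symm (fun p _ => (hp p).symm)
      (fun m hm => ih m (by omega)) (by omega)).symm
  by_cases hb1 : b.natAbs = 1
  · have ha1 : a.natAbs = 1 := by
      have := Int.natAbs_pos.2 ha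
      omega
    rcases Int.natAbs_eq_iff.1 ha1 with rfl | rfl
    · exact .of_isSquare _ (by simp)
    · rcases Int.natAbs_eq_iff.1 hb1 with rfl | rfl
      · exact (HilbertSolvable.of_isSquare _ (by simp)).symm
      · obtain ⟨x, y, z, h0, h⟩ := hR
        exfalso
        push_cast at h
        have hx : x = 0 := by nlinarith [sq_nonneg x, sq_nonneg y, sq_nonneg z]
        have hy : y = 0 := by nlinarith [sq_nonneg x, sq_nonneg y, sq_nonneg z]
        have hz : z = 0 := by nlinarith [sq_nonneg x, sq_nonneg y, sq_nonneg z]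
        tauto
  have hb2 : 2 ≤ b.natAbs := by
    have := Int.natAbs_pos.2 hb
    omega
  by_cases hsq : Squarefree b
  · obtain ⟨t, ht⟩ : ∃ t : ℤ, b ∣ t ^ 2 - a := by
      obtain ⟨t, ht⟩ := Squarefree.exists_dvd_sq_sub a b.natAbs (Int.squarefree_natAbs.2 hsq) (by
        intro p hpp hpb
        have : Fact p.Prime := ⟨hpp⟩
        refine (hp p).exists_dvd_sq_sub (fun hd => ?_) (Int.natCast_dvd.2 hpb)
        rw [sq] at hd
        exact (Nat.prime_iff_prime_int.1 hpp).not_isUnit (hsq _ hd))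
      exact ⟨t, Int.natAbs_dvd.1 ht⟩
    obtain ⟨t, htb, b', hb'⟩ := Int.exists_natAbs_le_dvd_sq_sub hb ht
    have hlt := Int.natAbs_lt_of_sq_sub_eq_mul hab hb2 htb hb'
    by_cases hb'0 : b' = 0
    · refine .of_isSquare _ ⟨t, ?_⟩
      have : a = t * t := by
        rw [hb'0] at hb'
        linear_combination -hb'
      exact_mod_cast this
    · have hcast : ∀ (K : Type) [Field K], (t : K) ^ 2 - a = b * b' := fun K _ => by
        exact_mod_cast congrArg (Int.cast : ℤ → K) hb'
      refine HilbertSolvable.of_norm (b := (b' : ℚ)) (by exact_mod_cast hb'0)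
        (by rw [hcast ℚ, mul_comm]) ?_
      exact ih _ (by omega) a b' ha hb'0 (hR.of_norm (by exact_mod_cast hb) (hcast ℝ))
        (fun p _ => (hp p).of_norm (by exact_mod_cast hb) (hcast ℚ_[p])) rfl
  · obtain ⟨c, ⟨b', rfl⟩, hcu⟩ : ∃ c : ℤ, c * c ∣ b ∧ ¬ IsUnit c := by
      simpa [Squarefree] using hsq
    have hc0 : c ≠ 0 := by
      rintro rfl
      simp at hb
    have hb'0 : b' ≠ 0 := by
      rintro rfl
      simp at hb
    have hc2 : 2 ≤ c.natAbs := by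
      have h1 := Int.natAbs_pos.2 hc0
      have h2 : c.natAbs ≠ 1 := fun h => hcu (Int.isUnit_iff_natAbs_eq.2 h)
      omega
    have hlt : b'.natAbs < (c * c * b').natAbs := by
      have := Int.natAbs_pos.2 hb'0
      have := Nat.mul_le_mul hc2 hc2
      rw [Int.natAbs_mul, Int.natAbs_mul]
      nlinarith
    have hcast : ∀ (K : Type) [Field K], ((c * c * b' : ℤ) : K) = (c : K) ^ 2 * b' :=
      fun K _ => by push_cast; ring
    have hdown : ∀ (K : Type) [Field K] [CharZero K], HilbertSolvable (a : K) (c * c * b' : ℤ) →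
        HilbertSolvable (a : K) b' := by
      intro K _ _ h
      rw [hcast] at h
      exact (HilbertSolvable.of_sq_mul (by exact_mod_cast hc0) h.symm).symm
    rw [hcast]
    refine (HilbertSolvable.sq_mul (by exact_mod_cast hc0) ?_).symm
    exact (ih _ (by omega) a b' ha hb'0 (hdown ℝ hR) (fun p _ => hdown ℚ_[p] (hp p)) rfl).symm

end Ternary

section Symbol

/-- The bilinear pairing on signs: `-1` exactly when both arguments are `-1`. -/
def signPairing (s t : ℤ) : ℤ := if s = -1 ∧ t = -1 then -1 else 1

theorem signPairing_mul {s₁ s₂ t : ℤ} (h₁ : s₁ = 1 ∨ s₁ = -1) (h₂ : s₂ = 1 ∨ s₂ = -1) :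
    signPairing (s₁ * s₂) t = signPairing s₁ t * signPairing s₂ t := by
  rcases h₁ with rfl | rfl <;> rcases h₂ with rfl | rfl <;> by_cases ht : t = -1 <;>
    simp [signPairing, ht]

theorem signPairing_comm (s t : ℤ) : signPairing s t = signPairing t s := by
  simp [signPairing, and_comm]

theorem signPairing_eq_one_or (s t : ℤ) : signPairing s t = 1 ∨ signPairing s t = -1 := by
  unfold signPairing
  split_ifs <;> simp

/-- The prime-to-`p` part of an integer. -/
def unitPart (p : ℕ) (a : ℤ) : ℤ := a / (p : ℤ) ^ padicValInt p a

variable {p : ℕ}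

theorem pow_padicValInt_mul_unitPart (p : ℕ) (a : ℤ) :
    (p : ℤ) ^ padicValInt p a * unitPart p a = a :=
  Int.mul_ediv_cancel' (padicValInt_dvd a)

theorem unitPart_mul [hp : Fact p.Prime] {a b : ℤ} (ha : a ≠ 0) (hb : b ≠ 0) :
    unitPart p (a * b) = unitPart p a * unitPart p b := by
  have h0 : (p : ℤ) ^ padicValInt p (a * b) ≠ 0 := pow_ne_zero _ (by exact_mod_cast hp.out.ne_zero)
  apply mul_left_cancel₀ h0
  rw [pow_padicValInt_mul_unitPart, padicValInt.mul ha hb, pow_add]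
  conv_lhs => rw [← pow_padicValInt_mul_unitPart p a, ← pow_padicValInt_mul_unitPart p b]
  ring

theorem unitPart_of_not_dvd {a : ℤ} (h : ¬ (p : ℤ) ∣ a) : unitPart p a = a := by
  rw [unitPart, padicValInt.eq_zero_of_not_dvd h, pow_zero, Int.ediv_one]

theorem not_dvd_unitPart [hp : Fact p.Prime] {a : ℤ} (ha : a ≠ 0) : ¬ (p : ℤ) ∣ unitPart p a := by
  rintro ⟨k, hk⟩
  have h := pow_padicValInt_mul_unitPart p a
  rw [hk, ← mul_assoc, ← pow_succ] at h
  have := (padicValInt_dvd_iff (p := p) (padicValInt p a + 1) a).1 (Dvd.intro _ h)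
  omega

theorem unitPart_self [hp : Fact p.Prime] : unitPart p p = 1 := by
  rw [unitPart, padicValInt_self, pow_one]
  exact Int.ediv_self (by exact_mod_cast hp.out.ne_zero)

theorem unitPart_neg (a : ℤ) : unitPart p (-a) = -unitPart p a := by
  have h : padicValInt p (-a) = padicValInt p a := by simp [padicValInt]
  rw [unitPart, h, Int.neg_ediv_of_dvd (padicValInt_dvd a), unitPart]

theorem padicValInt_neg (a : ℤ) : padicValInt p (-a) = padicValInt p a := by simp [padicValInt]

/-- The Hilbert symbol at an odd prime `p`, given by its explicit formula. -/
def oddHilbertSym (p : ℕ) (a b : ℤ) : ℤ :=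
  J(-1 | p) ^ (padicValInt p a * padicValInt p b) * J(unitPart p b | p) ^ padicValInt p a *
    J(unitPart p a | p) ^ padicValInt p b

/-- The Hilbert symbol at `2`, given by its explicit formula. -/
def twoHilbertSym (a b : ℤ) : ℤ :=
  signPairing (χ₄ (unitPart 2 a)) (χ₄ (unitPart 2 b)) * χ₈ (unitPart 2 b) ^ padicValInt 2 a *
    χ₈ (unitPart 2 a) ^ padicValInt 2 b

/-- The Hilbert symbol at the real place. -/
def realHilbertSym (a b : ℤ) : ℤ := signPairing a.sign b.sign

theorem oddHilbertSym_mul [Fact p.Prime] {a b : ℤ} (c : ℤ) (ha : a ≠ 0) (hb : b ≠ 0) :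
    oddHilbertSym p (a * b) c = oddHilbertSym p a c * oddHilbertSym p b c := by
  unfold oddHilbertSym
  rw [padicValInt.mul ha hb, unitPart_mul ha hb, jacobiSym.mul_left, add_mul, pow_add, pow_add,
    mul_pow]
  ring

theorem oddHilbertSym_comm (a b : ℤ) : oddHilbertSym p a b = oddHilbertSym p b a := by
  unfold oddHilbertSym
  rw [mul_comm (padicValInt p a)]
  ring

theorem jacobiSym_sq_eq_one [hp : Fact p.Prime] {a : ℤ} (ha : ¬ (p : ℤ) ∣ a) :
    J(a | p) ^ 2 = 1 :=
  jacobiSym.sq_one (Int.isCoprime_iff_gcd_eq_one.1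
    ((Prime.coprime_iff_not_dvd (Nat.prime_iff_prime_int.1 hp.out)).2 ha).symm)

theorem not_dvd_neg_one [hp : Fact p.Prime] : ¬ (p : ℤ) ∣ -1 := by
  rw [dvd_neg]
  exact (Nat.prime_iff_prime_int.1 hp.out).not_dvd_one

theorem oddHilbertSym_sq [Fact p.Prime] {a b : ℤ} (ha : a ≠ 0) (hb : b ≠ 0) :
    oddHilbertSym p a b ^ 2 = 1 := by
  unfold oddHilbertSym
  rw [mul_pow, mul_pow, pow_right_comm, pow_right_comm _ (padicValInt p a),
    pow_right_comm _ (padicValInt p b), jacobiSym_sq_eq_one not_dvd_neg_one,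
    jacobiSym_sq_eq_one (not_dvd_unitPart ha), jacobiSym_sq_eq_one (not_dvd_unitPart hb)]
  simp

theorem oddHilbertSym_neg_self [Fact p.Prime] {a : ℤ} (ha : a ≠ 0) :
    oddHilbertSym p a (-a) = 1 := by
  unfold oddHilbertSym
  rw [padicValInt_neg, unitPart_neg, neg_eq_neg_one_mul (unitPart p a), jacobiSym.mul_left, mul_pow]
  have h1 := jacobiSym_sq_eq_one (p := p) not_dvd_neg_one
  have h2 := jacobiSym_sq_eq_one (not_dvd_unitPart (p := p) ha)
  set v := padicValInt p a
  rw [show J(-1 | p) ^ (v * v) * (J(-1 | p) ^ v * J(unitPart p a | p) ^ v) *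
    J(unitPart p a | p) ^ v = J(-1 | p) ^ (v * v + v) * (J(unitPart p a | p) ^ 2) ^ v by ring, h2,
    one_pow, mul_one]
  obtain ⟨k, hk⟩ : Even (v * v + v) := by
    simpa [mul_add] using Nat.even_mul_succ_self v
  rw [hk, ← two_mul, pow_mul, h1, one_pow]

theorem oddHilbertSym_of_not_dvd {a b : ℤ} (ha : ¬ (p : ℤ) ∣ a) (hb : ¬ (p : ℤ) ∣ b) :
    oddHilbertSym p a b = 1 := by
  simp [oddHilbertSym, padicValInt.eq_zero_of_not_dvd ha, padicValInt.eq_zero_of_not_dvd hb]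

theorem oddHilbertSym_self_mul [hp : Fact p.Prime] {a b : ℤ} (ha : ¬ (p : ℤ) ∣ a)
    (hb : ¬ (p : ℤ) ∣ b) : oddHilbertSym p (p * a) b = J(b | p) := by
  have ha0 : a ≠ 0 := by
    rintro rfl
    simp at ha
  rw [oddHilbertSym_mul _ (by exact_mod_cast hp.out.ne_zero) ha0, oddHilbertSym_of_not_dvd ha hb,
    mul_one]
  simp [oddHilbertSym, padicValInt.eq_zero_of_not_dvd hb, unitPart_of_not_dvd hb]

theorem χ₄_eq_one_or {a : ℤ} (ha : ¬ (2 : ℤ) ∣ a) : χ₄ a = 1 ∨ χ₄ a = -1 := by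
  rw [ZMod.χ₄_int_eq_if_mod_four]
  split_ifs <;> simp
  omega

theorem χ₈_sq {a : ℤ} (ha : ¬ (2 : ℤ) ∣ a) : χ₈ a ^ 2 = 1 := by
  rw [ZMod.χ₈_int_eq_if_mod_eight]
  split_ifs <;> simp
  omega

theorem twoHilbertSym_mul {a b : ℤ} (c : ℤ) (ha : a ≠ 0) (hb : b ≠ 0) :
    twoHilbertSym (a * b) c = twoHilbertSym a c * twoHilbertSym b c := by
  unfold twoHilbertSym
  rw [padicValInt.mul ha hb, unitPart_mul ha hb, Int.cast_mul, Int.cast_mul, map_mul, map_mul,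
    signPairing_mul (χ₄_eq_one_or (not_dvd_unitPart ha)) (χ₄_eq_one_or (not_dvd_unitPart hb)),
    mul_pow, pow_add]
  ring

theorem twoHilbertSym_comm (a b : ℤ) : twoHilbertSym a b = twoHilbertSym b a := by
  unfold twoHilbertSym
  rw [signPairing_comm]
  ring

theorem twoHilbertSym_sq {a b : ℤ} (ha : a ≠ 0) (hb : b ≠ 0) :
    twoHilbertSym a b ^ 2 = 1 := by
  unfold twoHilbertSym
  rw [mul_pow, mul_pow, ← pow_mul, ← pow_mul, mul_comm _ 2, mul_comm _ 2,
    pow_mul, pow_mul, χ₈_sq (not_dvd_unitPart ha), χ₈_sq (not_dvd_unitPart hb)]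
  rcases signPairing_eq_one_or (χ₄ (unitPart 2 a)) (χ₄ (unitPart 2 b)) with h | h <;>
    rw [h] <;> simp

theorem twoHilbertSym_neg_self {a : ℤ} (ha : a ≠ 0) : twoHilbertSym a (-a) = 1 := by
  unfold twoHilbertSym
  have h2 := χ₈_sq (not_dvd_unitPart (p := 2) ha)
  have h4 := χ₄_eq_one_or (not_dvd_unitPart (p := 2) ha)
  rw [padicValInt_neg, unitPart_neg, neg_eq_neg_one_mul (unitPart 2 a), Int.cast_mul, Int.cast_mul,
    map_mul, map_mul]
  have e8 : χ₈ ((-1 : ℤ) : ZMod 8) = 1 := by decide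
  have e4 : χ₄ ((-1 : ℤ) : ZMod 4) = -1 := by decide
  rw [e8, e4, one_mul, mul_assoc, ← mul_pow, ← sq, h2, one_pow, mul_one]
  rcases h4 with h | h <;> simp [signPairing, h]

theorem twoHilbertSym_of_not_dvd {a b : ℤ} (ha : ¬ (2 : ℤ) ∣ a) (hb : ¬ (2 : ℤ) ∣ b) :
    twoHilbertSym a b = signPairing (χ₄ a) (χ₄ b) := by
  have ha' : padicValInt 2 a = 0 := padicValInt.eq_zero_of_not_dvd ha
  have hb' : padicValInt 2 b = 0 := padicValInt.eq_zero_of_not_dvd hb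
  simp [twoHilbertSym, ha', hb', unitPart_of_not_dvd (p := 2) ha, unitPart_of_not_dvd (p := 2) hb]

theorem twoHilbertSym_two_left {b : ℤ} (hb : ¬ (2 : ℤ) ∣ b) : twoHilbertSym 2 b = χ₈ b := by
  have h1 : unitPart 2 2 = 1 := unitPart_self (p := 2)
  have h2 : padicValInt 2 2 = 1 := padicValInt_self (p := 2)
  have hb' : padicValInt 2 b = 0 := padicValInt.eq_zero_of_not_dvd hb
  simp [twoHilbertSym, h1, h2, hb', unitPart_of_not_dvd (p := 2) hb, signPairing]

theorem twoHilbertSym_two_mul {a b : ℤ} (ha : ¬ (2 : ℤ) ∣ a) (hb : ¬ (2 : ℤ) ∣ b) :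
    twoHilbertSym (2 * a) b = χ₈ b * signPairing (χ₄ a) (χ₄ b) := by
  have ha0 : a ≠ 0 := by
    rintro rfl
    simp at ha
  rw [twoHilbertSym_mul _ two_ne_zero ha0, twoHilbertSym_of_not_dvd ha hb,
    twoHilbertSym_two_left hb]

theorem realHilbertSym_mul {a b : ℤ} (c : ℤ) (ha : a ≠ 0) (hb : b ≠ 0) :
    realHilbertSym (a * b) c = realHilbertSym a c * realHilbertSym b c := by
  have h : ∀ {n : ℤ}, n ≠ 0 → n.sign = 1 ∨ n.sign = -1 := by
    intro n hn
    rcases lt_or_gt_of_ne hn with h | h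
    · exact Or.inr (Int.sign_eq_neg_one_of_neg h)
    · exact Or.inl (Int.sign_eq_one_of_pos h)
  unfold realHilbertSym
  rw [Int.sign_mul, signPairing_mul (h ha) (h hb)]

theorem realHilbertSym_comm (a b : ℤ) : realHilbertSym a b = realHilbertSym b a :=
  signPairing_comm _ _

end Symbol

section LocalSymbol

theorem Int.cast_zmod_eight_mem_of_odd {a : ℤ} (ha : ¬ (2 : ℤ) ∣ a) :
    (a : ZMod 8) ∈ ({1, 3, 5, 7} : Finset (ZMod 8)) := by
  have h : a % 8 = 1 ∨ a % 8 = 3 ∨ a % 8 = 5 ∨ a % 8 = 7 := by omega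
  rw [← ZMod.intCast_mod a 8, Nat.cast_ofNat]
  rcases h with h | h | h | h <;> rw [h] <;> decide

variable {p : ℕ} [hp : Fact p.Prime]

theorem Int.exists_eq_sq_mul_or (p : ℕ) [hp : Fact p.Prime] {a : ℤ} (ha : a ≠ 0) :
    ∃ c u : ℤ, c ≠ 0 ∧ ¬ (p : ℤ) ∣ u ∧ (a = c ^ 2 * u ∨ a = c ^ 2 * (p * u)) := by
  refine ⟨p ^ (padicValInt p a / 2), unitPart p a, pow_ne_zero _ (by exact_mod_cast hp.out.ne_zero),
    not_dvd_unitPart ha, ?_⟩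
  have h := pow_padicValInt_mul_unitPart p a
  rcases Nat.mod_two_eq_zero_or_one (padicValInt p a) with h2 | h2
  · left
    rw [← pow_mul, Nat.div_mul_cancel (Nat.dvd_of_mod_eq_zero h2), h]
  · right
    rw [← mul_assoc, ← pow_mul, ← pow_succ,
      show padicValInt p a / 2 * 2 + 1 = padicValInt p a by omega, h]

/-- A symbol with the formal properties of the Hilbert symbol is trivial on solvable pairs, once
this is known when the first entry has valuation at most one and the second is a unit. -/
theorem HilbertSolvable.symbol_eq_one {H : ℤ → ℤ → ℤ}
    (hmul : ∀ a b c : ℤ, a ≠ 0 → b ≠ 0 → H (a * b) c = H a c * H b c)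
    (hcomm : ∀ a b, H a b = H b a)
    (hsq : ∀ a b : ℤ, a ≠ 0 → b ≠ 0 → H a b ^ 2 = 1)
    (hneg : ∀ a : ℤ, a ≠ 0 → H a (-a) = 1)
    (hunit : ∀ a b : ℤ, ¬ (p : ℤ) ∣ a → ¬ (p : ℤ) ∣ b → HilbertSolvable (a : ℚ_[p]) b →
      H a b = 1)
    (hunif : ∀ a b : ℤ, ¬ (p : ℤ) ∣ a → ¬ (p : ℤ) ∣ b →
      HilbertSolvable ((p * a : ℤ) : ℚ_[p]) b → H (p * a) b = 1)
    {a b : ℤ} (ha : a ≠ 0) (hb : b ≠ 0) (h : HilbertSolvable (a : ℚ_[p]) b) : H a b = 1 := by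
  have hp0 : (p : ℤ) ≠ 0 := by exact_mod_cast hp.out.ne_zero
  have hpp : Prime (p : ℤ) := Nat.prime_iff_prime_int.1 hp.out
  have hne : ∀ {u : ℤ}, ¬ (p : ℤ) ∣ u → u ≠ 0 := by
    rintro u hu rfl
    simp at hu
  have hsqmul : ∀ c a b : ℤ, c ≠ 0 → a ≠ 0 → b ≠ 0 → H (c ^ 2 * a) b = H a b := by
    intro c a b hc ha hb
    rw [hmul _ _ _ (pow_ne_zero 2 hc) ha, sq, hmul _ _ _ hc hc, ← sq, hsq c b hc hb, one_mul]
  have hsol : ∀ c a b : ℤ, c ≠ 0 → HilbertSolvable ((c ^ 2 * a : ℤ) : ℚ_[p]) b →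
      HilbertSolvable (a : ℚ_[p]) b := by
    intro c a b hc h
    push_cast at h
    exact h.of_sq_mul (by exact_mod_cast hc)
  have key : ∀ a b : ℤ, ¬ (p : ℤ) ∣ a → ¬ (p : ℤ) ∣ b →
      HilbertSolvable ((p * a : ℤ) : ℚ_[p]) ((p * b : ℤ) : ℚ_[p]) → H (p * a) (p * b) = 1 := by
    intro a b ha hb h
    have hpa := mul_ne_zero hp0 (hne ha)
    have hpb := mul_ne_zero hp0 (hne hb)
    have hab : ¬ (p : ℤ) ∣ -(a * b) := by
      rw [dvd_neg, hpp.dvd_mul]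
      tauto
    have e : -(p * a * (p * b)) = (p : ℤ) ^ 2 * -(a * b) := by ring
    have h1 : H (p * a) (-(p * a * (p * b))) = 1 := by
      rw [e, hcomm, hsqmul _ _ _ hp0 (hne hab) hpa, hcomm]
      refine hunif a _ ha hab ?_
      have h2 := h.neg_mul_right (by exact_mod_cast hpa)
      rw [← Int.cast_mul, ← Int.cast_neg, e] at h2
      exact (hsol _ _ _ hp0 h2.symm).symm
    rwa [← neg_mul, hcomm, hmul _ _ _ (neg_ne_zero.2 hpa) hpb, hcomm _ (p * a), hneg _ hpa,
      one_mul, hcomm] at h1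
  obtain ⟨c, u, hc, hu, hau⟩ := Int.exists_eq_sq_mul_or p ha
  obtain ⟨d, v, hd, hv, hbv⟩ := Int.exists_eq_sq_mul_or p hb
  have hred : ∀ u' v' : ℤ, u' ≠ 0 → v' ≠ 0 → a = c ^ 2 * u' → b = d ^ 2 * v' →
      (HilbertSolvable (u' : ℚ_[p]) v' → H u' v' = 1) → H a b = 1 := by
    intro u' v' hu' hv' ea eb hH
    rw [ea, hsqmul _ _ _ hc hu' hb, hcomm, eb, hsqmul _ _ _ hd hv' hu', hcomm]
    rw [ea] at h
    have h' := (hsol _ _ _ hc h).symm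
    rw [eb] at h'
    exact hH (hsol _ _ _ hd h').symm
  have hpu := mul_ne_zero hp0 (hne hu)
  have hpv := mul_ne_zero hp0 (hne hv)
  rcases hau with hau | hau <;> rcases hbv with hbv | hbv
  · exact hred _ _ (hne hu) (hne hv) hau hbv (hunit u v hu hv)
  · refine hred _ _ (hne hu) hpv hau hbv fun hs => ?_
    rw [hcomm]
    exact hunif v u hv hu hs.symm
  · exact hred _ _ hpu (hne hv) hau hbv (hunif u v hu hv)
  · exact hred _ _ hpu hpv hau hbv (key u v hu hv)

theorem oddHilbertSym_eq_one_of_solvable {a b : ℤ} (ha : a ≠ 0) (hb : b ≠ 0)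
    (h : HilbertSolvable (a : ℚ_[p]) b) : oddHilbertSym p a b = 1 := by
  have hpp : Prime (p : ℤ) := Nat.prime_iff_prime_int.1 hp.out
  refine h.symbol_eq_one (fun a b c => oddHilbertSym_mul c) oddHilbertSym_comm
    (fun a b => oddHilbertSym_sq) (fun a => oddHilbertSym_neg_self)
    (fun a b ha hb _ => oddHilbertSym_of_not_dvd ha hb) (fun a b ha hb h => ?_) ha hb
  rw [oddHilbertSym_self_mul ha hb, ← jacobiSym.legendreSym.to_jacobiSym,
    legendreSym.eq_one_iff p ((ZMod.intCast_zmod_eq_zero_iff_dvd b p).not.2 hb)]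
  obtain ⟨t, ht⟩ := h.symm.exists_dvd_sq_sub
    (by rw [sq, mul_dvd_mul_iff_left hpp.ne_zero]; exact ha) (Dvd.intro a rfl)
  rw [← ZMod.intCast_zmod_eq_zero_iff_dvd] at ht
  refine ⟨t, ?_⟩
  push_cast at ht
  linear_combination -ht

theorem twoHilbertSym_eq_one_of_solvable {a b : ℤ} (ha : a ≠ 0) (hb : b ≠ 0)
    (h : HilbertSolvable (a : ℚ_[2]) b) : twoHilbertSym a b = 1 := by
  refine h.symbol_eq_one (p := 2) (fun a b c => twoHilbertSym_mul c) twoHilbertSym_comm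
    (fun a b => twoHilbertSym_sq) (fun a => twoHilbertSym_neg_self)
    (fun a b ha hb h => ?_) (fun a b ha hb h => ?_) ha hb
  · rw [Nat.cast_ofNat] at ha hb
    rw [twoHilbertSym_of_not_dvd ha hb]
    obtain ⟨x, y, z, h0, hd⟩ := h.exists_int 2
    rw [signPairing, if_neg]
    rintro ⟨h1, h2⟩
    rw [ZMod.χ₄_int_eq_if_mod_four] at h1 h2
    have ha3 : a % 4 = 3 := by
      by_contra
      split_ifs at h1
      omega
    have hb3 : b % 4 = 3 := by
      by_contra
      split_ifs at h2
      omega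
    have ha4 : (a : ZMod 4) = 3 := by
      rw [← ZMod.intCast_mod a 4, Nat.cast_ofNat, ha3]; rfl
    have hb4 : (b : ZMod 4) = 3 := by
      rw [← ZMod.intCast_mod b 4, Nat.cast_ofNat, hb3]; rfl
    have hd4 : ((x ^ 2 - a * y ^ 2 - b * z ^ 2 : ℤ) : ZMod 4) = 0 :=
      (ZMod.intCast_zmod_eq_zero_iff_dvd _ 4).2 (by exact_mod_cast hd)
    push_cast at hd4
    rw [ha4, hb4] at hd4
    have key : ∀ x y z : ZMod 4, x ^ 2 - 3 * y ^ 2 - 3 * z ^ 2 = 0 →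
        2 * x = 0 ∧ 2 * y = 0 ∧ 2 * z = 0 := by decide
    have h2 : ∀ w : ℤ, 2 * (w : ZMod 4) = 0 → ((2 : ℕ) : ℤ) ∣ w := by
      intro w hw
      have : (4 : ℤ) ∣ 2 * w :=
        (ZMod.intCast_zmod_eq_zero_iff_dvd (2 * w) 4).1 (by exact_mod_cast hw)
      omega
    obtain ⟨k1, k2, k3⟩ := key _ _ _ hd4
    exact h0 ⟨h2 x k1, h2 y k2, h2 z k3⟩
  · rw [Nat.cast_ofNat] at ha hb h ⊢
    rw [twoHilbertSym_two_mul ha hb]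
    obtain ⟨x, y, z, h0, hd⟩ := h.exists_int 3
    have hd8 : ((x ^ 2 - 2 * a * y ^ 2 - b * z ^ 2 : ℤ) : ZMod 8) = 0 :=
      (ZMod.intCast_zmod_eq_zero_iff_dvd _ 8).2 (by exact_mod_cast hd)
    push_cast at hd8
    have h2 : ∀ w : ℤ, ((2 : ℕ) : ℤ) ∣ w ↔ 4 * (w : ZMod 8) = 0 := by
      intro w
      have : (4 : ZMod 8) * w = ((4 * w : ℤ) : ZMod 8) := by push_cast; rfl
      rw [this, ZMod.intCast_zmod_eq_zero_iff_dvd]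
      omega
    rw [h2, h2, h2] at h0
    have hQ : ∀ w : ZMod 8, w ^ 2 ∈ ({0, 1, 4} : Finset (ZMod 8)) ∧ (4 * w = 0 ↔ w ^ 2 ≠ 1) := by
      decide
    have key : ∀ a ∈ ({1, 3, 5, 7} : Finset (ZMod 8)), ∀ b ∈ ({1, 3, 5, 7} : Finset (ZMod 8)),
        ∀ X ∈ ({0, 1, 4} : Finset (ZMod 8)), ∀ Y ∈ ({0, 1, 4} : Finset (ZMod 8)),
        ∀ Z ∈ ({0, 1, 4} : Finset (ZMod 8)), ¬ (X ≠ 1 ∧ Y ≠ 1 ∧ Z ≠ 1) →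
        X - 2 * a * Y - b * Z = 0 →
        χ₈ b * signPairing (χ₄ (ZMod.castHom (by decide : 4 ∣ 8) (ZMod 4) a))
          (χ₄ (ZMod.castHom (by decide : 4 ∣ 8) (ZMod 4) b)) = 1 := by
      decide
    have := key a (Int.cast_zmod_eight_mem_of_odd ha) b (Int.cast_zmod_eight_mem_of_odd hb)
      _ (hQ x).1 _ (hQ y).1 _ (hQ z).1
      (by rwa [← (hQ x).2, ← (hQ y).2, ← (hQ z).2]) hd8
    simpa only [map_intCast] using this

end LocalSymbol

section ProductFormula

theorem Int.induction_on_odd_primes {S : Finset ℕ} {P : ℤ → Prop} (neg_one : P (-1)) (two : P 2)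
    (prime : ∀ p ∈ S, P p) (mul : ∀ a b : ℤ, a ≠ 0 → b ≠ 0 → P a → P b → P (a * b))
    {a : ℤ} (ha : a ≠ 0) (hS : ∀ p : ℕ, p.Prime → p ≠ 2 → (p : ℤ) ∣ a → p ∈ S) : P a := by
  have one : P 1 := by
    have := mul (-1) (-1) (by decide) (by decide) neg_one neg_one
    simpa using this
  have nat : ∀ n : ℕ, n ≠ 0 → (∀ p : ℕ, p.Prime → p ≠ 2 → p ∣ n → p ∈ S) → P n := by
    intro n
    induction n using induction_on_primes with
    | zero => exact fun h => absurd rfl h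
    | one => exact fun _ _ => by exact_mod_cast one
    | prime_mul p m hp ih =>
      intro h0 h
      have hm : m ≠ 0 := right_ne_zero_of_mul h0
      rw [Nat.cast_mul]
      refine mul _ _ (by exact_mod_cast hp.ne_zero) (by exact_mod_cast hm) ?_
        (ih hm fun q hq hq2 hqm => h q hq hq2 (hqm.mul_left p))
      by_cases hp2 : p = 2
      · subst hp2
        exact_mod_cast two
      · exact prime p (h p hp hp2 (Dvd.intro m rfl))
  have habs := nat a.natAbs (Int.natAbs_ne_zero.2 ha)
    fun p hp hp2 hpa => hS p hp hp2 (Int.natCast_dvd.2 hpa)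
  rcases Int.natAbs_eq a with h | h
  · rwa [h]
  · rw [h, neg_eq_neg_one_mul]
    exact mul _ _ (by decide) (by simpa using ha) neg_one habs

/-- The product of the Hilbert symbols over the real place, `2`, and the odd primes in `S`. -/
def hilbertSymProd (S : Finset ℕ) (a b : ℤ) : ℤ :=
  realHilbertSym a b * twoHilbertSym a b * ∏ p ∈ S, oddHilbertSym p a b

variable {S : Finset ℕ}

theorem hilbertSymProd_comm (a b : ℤ) : hilbertSymProd S a b = hilbertSymProd S b a := by
  unfold hilbertSymProd
  rw [realHilbertSym_comm, twoHilbertSym_comm]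
  simp only [oddHilbertSym_comm a b]

theorem hilbertSymProd_mul (hS : ∀ p ∈ S, p.Prime) {a b : ℤ} (c : ℤ) (ha : a ≠ 0) (hb : b ≠ 0) :
    hilbertSymProd S (a * b) c = hilbertSymProd S a c * hilbertSymProd S b c := by
  unfold hilbertSymProd
  have : ∏ p ∈ S, oddHilbertSym p (a * b) c =
      (∏ p ∈ S, oddHilbertSym p a c) * ∏ p ∈ S, oddHilbertSym p b c := by
    rw [← Finset.prod_mul_distrib]
    refine Finset.prod_congr rfl fun p hp => ?_
    have : Fact p.Prime := ⟨hS p hp⟩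
    exact oddHilbertSym_mul c ha hb
  rw [realHilbertSym_mul c ha hb, twoHilbertSym_mul c ha hb, this]
  ring

theorem hilbertSymProd_of_not_dvd {a b : ℤ} (ha : ∀ p ∈ S, ¬ (p : ℤ) ∣ a)
    (hb : ∀ p ∈ S, ¬ (p : ℤ) ∣ b) :
    hilbertSymProd S a b = realHilbertSym a b * twoHilbertSym a b := by
  unfold hilbertSymProd
  rw [Finset.prod_eq_one fun p hp => oddHilbertSym_of_not_dvd (ha p hp) (hb p hp), mul_one]

theorem Nat.Prime.not_intCast_dvd {p q : ℕ} (hp : p.Prime) (hq : q.Prime) (hpq : p ≠ q) :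
    ¬ (p : ℤ) ∣ q := fun h =>
  hpq ((Nat.prime_dvd_prime_iff_eq hp hq).1 (by exact_mod_cast h))

theorem Nat.Prime.not_two_dvd_intCast {p : ℕ} (hp : p.Prime) (hp2 : p ≠ 2) : ¬ (2 : ℤ) ∣ p :=
  Nat.prime_two.not_intCast_dvd hp hp2.symm

theorem hilbertSymProd_prime_left (hS : ∀ p ∈ S, p.Prime) {l : ℕ} (hl : l ∈ S) {b : ℤ}
    (hb : ∀ p ∈ S, ¬ (p : ℤ) ∣ b) :
    hilbertSymProd S l b = twoHilbertSym l b * J(b | l) := by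
  have hlp : Fact l.Prime := ⟨hS l hl⟩
  have h1 : oddHilbertSym l l b = J(b | l) := by
    have := oddHilbertSym_self_mul (p := l) (a := 1)
      (Nat.prime_iff_prime_int.1 hlp.out).not_dvd_one (hb l hl)
    rwa [mul_one] at this
  have hr : realHilbertSym l b = 1 := by
    have : (l : ℤ).sign = 1 := Int.sign_eq_one_of_pos (by exact_mod_cast hlp.out.pos)
    simp [realHilbertSym, signPairing, this]
  unfold hilbertSymProd
  rw [hr, one_mul, Finset.prod_eq_single l, h1]
  · intro p hp hpl
    exact oddHilbertSym_of_not_dvd ((hS p hp).not_intCast_dvd hlp.out hpl) (hb p hp)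
  · exact fun h => absurd hl h

theorem twoHilbertSym_neg_one_left {l : ℕ} (hl : l.Prime) (hl2 : l ≠ 2) :
    twoHilbertSym (-1) l = χ₄ l := by
  have h2 := hl.not_two_dvd_intCast hl2
  have h4 := χ₄_eq_one_or h2
  have e4 : χ₄ ((-1 : ℤ) : ZMod 4) = -1 := by decide
  rw [twoHilbertSym_of_not_dvd (by decide) h2, e4]
  rw [Int.cast_natCast] at h4 ⊢
  rcases h4 with h | h <;> rw [h] <;> rfl

theorem χ₄_natCast_mul_self {l : ℕ} (hl : l.Prime) (hl2 : l ≠ 2) : χ₄ l * χ₄ l = 1 := by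
  have h4 := χ₄_eq_one_or (hl.not_two_dvd_intCast hl2)
  rw [Int.cast_natCast] at h4
  rcases h4 with h | h <;> rw [h] <;> rfl

theorem hilbertSymProd_prime_prime (hS : ∀ p ∈ S, p.Prime) (hS2 : ∀ p ∈ S, p ≠ 2) {l m : ℕ}
    (hl : l ∈ S) (hm : m ∈ S) (hlm : l ≠ m) : hilbertSymProd S l m = 1 := by
  have hlp : Fact l.Prime := ⟨hS l hl⟩
  have hmp : Fact m.Prime := ⟨hS m hm⟩
  have h1 : ∀ {p q : ℕ} [Fact p.Prime] [Fact q.Prime], p ≠ q → oddHilbertSym p p q = J(q | p) := by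
    intro p q hp hq hpq
    have := oddHilbertSym_self_mul (p := p) (a := 1)
      (Nat.prime_iff_prime_int.1 hp.out).not_dvd_one (hp.out.not_intCast_dvd hq.out hpq)
    rwa [mul_one] at this
  have hr : realHilbertSym l m = 1 := by
    have : (l : ℤ).sign = 1 := Int.sign_eq_one_of_pos (by exact_mod_cast hlp.out.pos)
    simp [realHilbertSym, signPairing, this]
  have hl2 := hlp.out.not_two_dvd_intCast (hS2 l hl)
  have hm2 := hmp.out.not_two_dvd_intCast (hS2 m hm)
  unfold hilbertSymProd
  rw [hr, one_mul, Finset.prod_eq_mul l m hlm, h1 hlm, oddHilbertSym_comm, h1 hlm.symm,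
    twoHilbertSym_of_not_dvd hl2 hm2]
  · have hlo : Odd l := hlp.out.odd_of_ne_two (hS2 l hl)
    have hmo : Odd m := hmp.out.odd_of_ne_two (hS2 m hm)
    have hsq : J(l | m) * J(l | m) = 1 := by
      rw [← sq]
      exact jacobiSym_sq_eq_one (hmp.out.not_intCast_dvd hlp.out hlm.symm)
    have hrec : J(m | l) = signPairing (χ₄ l) (χ₄ m) * J(l | m) := by
      rw [← jacobiSym.quadratic_reciprocity_if (Nat.odd_iff.1 hmo) (Nat.odd_iff.1 hlo),
        ZMod.χ₄_nat_eq_if_mod_four, ZMod.χ₄_nat_eq_if_mod_four, Nat.odd_iff.1 hlo,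
        Nat.odd_iff.1 hmo]
      rcases Nat.odd_mod_four_iff.1 (Nat.odd_iff.1 hlo) with h | h <;>
        rcases Nat.odd_mod_four_iff.1 (Nat.odd_iff.1 hmo) with h' | h' <;>
        simp [h, h', signPairing]
    have hss : signPairing (χ₄ l) (χ₄ m) * signPairing (χ₄ l) (χ₄ m) = 1 := by
      rcases signPairing_eq_one_or (χ₄ l) (χ₄ m) with h | h <;> rw [h] <;> rfl
    rw [hrec, Int.cast_natCast, Int.cast_natCast]
    linear_combination J(l | m) * J(l | m) * hss + hsq
  · intro p hp hpl
    exact oddHilbertSym_of_not_dvd ((hS p hp).not_intCast_dvd hlp.out hpl.1)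
      ((hS p hp).not_intCast_dvd hmp.out hpl.2)
  · exact fun h => absurd hl h
  · exact fun h => absurd hm h

/-- Hilbert's product formula over `ℚ`. -/
theorem hilbertSymProd_eq_one (hS : ∀ p ∈ S, p.Prime) (hS2 : ∀ p ∈ S, p ≠ 2) {a b : ℤ}
    (ha : a ≠ 0) (hb : b ≠ 0) (haS : ∀ p : ℕ, p.Prime → p ≠ 2 → (p : ℤ) ∣ a → p ∈ S)
    (hbS : ∀ p : ℕ, p.Prime → p ≠ 2 → (p : ℤ) ∣ b → p ∈ S) : hilbertSymProd S a b = 1 := by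
  have hn1 : ∀ p ∈ S, ¬ (p : ℤ) ∣ -1 := fun p hp => by
    have : Fact p.Prime := ⟨hS p hp⟩
    exact not_dvd_neg_one
  have hn2 : ∀ p ∈ S, ¬ (p : ℤ) ∣ 2 := fun p hp =>
    (hS p hp).not_intCast_dvd Nat.prime_two (hS2 p hp)
  have hneg : ∀ l ∈ S, hilbertSymProd S l (-1) = 1 := by
    intro l hl
    rw [hilbertSymProd_prime_left hS hl hn1, twoHilbertSym_comm,
      twoHilbertSym_neg_one_left (hS l hl) (hS2 l hl),
      jacobiSym.at_neg_one ((hS l hl).odd_of_ne_two (hS2 l hl)),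
      χ₄_natCast_mul_self (hS l hl) (hS2 l hl)]
  have htwo : ∀ l ∈ S, hilbertSymProd S l 2 = 1 := by
    intro l hl
    have h2 := (hS l hl).not_two_dvd_intCast (hS2 l hl)
    rw [hilbertSymProd_prime_left hS hl hn2, twoHilbertSym_comm, twoHilbertSym_two_left h2,
      jacobiSym.at_two ((hS l hl).odd_of_ne_two (hS2 l hl))]
    have h8 := χ₈_sq h2
    rw [Int.cast_natCast] at h8 ⊢
    rw [← sq, h8]
  have hself : ∀ l ∈ S, hilbertSymProd S l l = 1 := by
    intro l hl
    have hl0 : (l : ℤ) ≠ 0 := by exact_mod_cast (hS l hl).ne_zero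
    have h := hneg l hl
    have h1 : hilbertSymProd S (-l) l = 1 := by
      have hr : realHilbertSym l (-l) = 1 := by
        have : (l : ℤ).sign = 1 := Int.sign_eq_one_of_pos (by exact_mod_cast (hS l hl).pos)
        simp [realHilbertSym, signPairing, this]
      rw [hilbertSymProd_comm]
      unfold hilbertSymProd
      rw [hr, twoHilbertSym_neg_self hl0, Finset.prod_eq_one, one_mul, mul_one]
      intro p hp
      have : Fact p.Prime := ⟨hS p hp⟩
      exact oddHilbertSym_neg_self hl0
    rwa [neg_eq_neg_one_mul, hilbertSymProd_mul hS _ (by decide) hl0, hilbertSymProd_comm, h,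
      one_mul] at h1
  have h2u : unitPart 2 2 = 1 := unitPart_self (p := 2)
  have h22 : hilbertSymProd S 2 2 = 1 := by
    rw [hilbertSymProd_of_not_dvd hn2 hn2]
    simp [realHilbertSym, twoHilbertSym, signPairing, h2u]
  have h12 : hilbertSymProd S (-1) 2 = 1 := by
    rw [hilbertSymProd_of_not_dvd hn1 hn2, twoHilbertSym_comm, twoHilbertSym_two_left (by decide)]
    decide
  have h11 : hilbertSymProd S (-1) (-1) = 1 := by
    rw [hilbertSymProd_of_not_dvd hn1 hn1, twoHilbertSym_of_not_dvd (by decide) (by decide)]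
    decide
  have right : ∀ g : ℤ, hilbertSymProd S g (-1) = 1 → hilbertSymProd S g 2 = 1 →
      (∀ m ∈ S, hilbertSymProd S g m = 1) → hilbertSymProd S g b = 1 := fun g hg1 hg2 hg =>
    Int.induction_on_odd_primes (P := fun b => hilbertSymProd S g b = 1) hg1 hg2 hg
      (fun a c ha hc h1 h2 => by
        rw [hilbertSymProd_comm] at h1 h2 ⊢
        rw [hilbertSymProd_mul hS g ha hc, h1, h2, one_mul]) hb hbS
  refine Int.induction_on_odd_primes (P := fun a => hilbertSymProd S a b = 1) ?_ ?_ ?_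
    (fun a c ha hc h1 h2 => by rw [hilbertSymProd_mul hS b ha hc, h1, h2, one_mul]) ha haS
  · exact right _ h11 h12 fun m hm => by rw [hilbertSymProd_comm, hneg m hm]
  · exact right _ (by rw [hilbertSymProd_comm, h12]) h22 fun m hm => by
      rw [hilbertSymProd_comm, htwo m hm]
  · intro l hl
    refine right _ (hneg l hl) (htwo l hl) fun m hm => ?_
    by_cases hlm : l = m
    · rw [← hlm, hself l hl]
    · exact hilbertSymProd_prime_prime hS hS2 hl hm hlm

theorem realHilbertSym_eq_one_of_solvable {a b : ℤ} (h : HilbertSolvable (a : ℝ) b) :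
    realHilbertSym a b = 1 := by
  by_contra hne
  have hab : a.sign = -1 ∧ b.sign = -1 := by
    by_contra hab
    exact hne (by rw [realHilbertSym, signPairing, if_neg hab])
  have ha : (a : ℝ) < 0 := by exact_mod_cast Int.sign_eq_neg_one_iff_neg.1 hab.1
  have hb : (b : ℝ) < 0 := by exact_mod_cast Int.sign_eq_neg_one_iff_neg.1 hab.2
  obtain ⟨x, y, z, hxyz, h⟩ := h
  have hx := sq_nonneg x
  have hy := mul_nonneg_of_nonpos_of_nonpos ha.le (neg_nonpos.2 (sq_nonneg y))
  have hz := mul_nonneg_of_nonpos_of_nonpos hb.le (neg_nonpos.2 (sq_nonneg z))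
  have hx0 : x = 0 := pow_eq_zero_iff two_ne_zero |>.1 (by linarith)
  have hy0 : y = 0 := by
    have : (a : ℝ) * y ^ 2 = 0 := by linarith
    simpa [ha.ne] using this
  have hz0 : z = 0 := by
    have : (b : ℝ) * z ^ 2 = 0 := by linarith
    simpa [hb.ne] using this
  simp [hx0, hy0, hz0] at hxyz

/-- If `x ^ 2 = a y ^ 2 + q b z ^ 2` is solvable at every place other than the odd prime `q`, then
it is solvable at `q`. -/
theorem HilbertSolvable.of_forall_ne {a b : ℤ} {q : ℕ} [hq : Fact q.Prime] (hq2 : q ≠ 2)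
    (ha : ¬ (q : ℤ) ∣ a) (hb : ¬ (q : ℤ) ∣ b) (hR : HilbertSolvable (a : ℝ) (q * b : ℤ))
    (h : ∀ (p : ℕ) [Fact p.Prime], p ≠ q → HilbertSolvable (a : ℚ_[p]) (q * b : ℤ)) :
    HilbertSolvable (a : ℚ_[q]) (q * b : ℤ) := by
  have ha0 : a ≠ 0 := fun h0 => ha (h0 ▸ dvd_zero _)
  have hb0 : b ≠ 0 := fun h0 => hb (h0 ▸ dvd_zero _)
  have hq0 : (q : ℤ) ≠ 0 := by exact_mod_cast hq.out.ne_zero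
  have hqb0 : q * b ≠ 0 := mul_ne_zero hq0 hb0
  set S : Finset ℕ := (a * (q * b)).natAbs.primeFactors.filter (· ≠ 2) with hSdef
  have mem : ∀ p : ℕ, p.Prime → p ≠ 2 → (p : ℤ) ∣ a * (q * b) → p ∈ S := fun p hp hp2 hpa =>
    Finset.mem_filter.2 ⟨Nat.mem_primeFactors.2 ⟨hp, Int.natCast_dvd.1 hpa,
      Int.natAbs_ne_zero.2 (mul_ne_zero ha0 hqb0)⟩, hp2⟩
  have hS : ∀ p ∈ S, p.Prime := fun p hp => Nat.prime_of_mem_primeFactors (Finset.mem_filter.1 hp).1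
  have hS2 : ∀ p ∈ S, p ≠ 2 := fun p hp => (Finset.mem_filter.1 hp).2
  have hprod := hilbertSymProd_eq_one hS hS2 ha0 hqb0
    (fun p hp hp2 hpa => mem p hp hp2 (hpa.mul_right _))
    (fun p hp hp2 hpa => mem p hp hp2 (hpa.mul_left _))
  have : Fact (Nat.Prime 2) := ⟨Nat.prime_two⟩
  unfold hilbertSymProd at hprod
  rw [realHilbertSym_eq_one_of_solvable hR,
    twoHilbertSym_eq_one_of_solvable ha0 hqb0 (h 2 hq2.symm), one_mul, one_mul,
    Finset.prod_eq_single q, oddHilbertSym_comm, oddHilbertSym_self_mul hb ha,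
    ← jacobiSym.legendreSym.to_jacobiSym] at hprod
  · exact .of_isSquare _ (Padic.isSquare_intCast hq2 ha ((legendreSym.eq_one_iff q
      (by rwa [Ne, ZMod.intCast_zmod_eq_zero_iff_dvd])).1 hprod))
  · intro p hp hpq
    have : Fact p.Prime := ⟨hS p hp⟩
    exact oddHilbertSym_eq_one_of_solvable ha0 hqb0 (h p hpq)
  · exact fun hqS => absurd (mem q hq.out hq2 ((Dvd.intro b rfl).mul_left a)) hqS

end ProductFormula

section Approximation

variable {S : Finset ℕ}

/-- Simultaneous approximation of finitely many `p`-adic integers by a natural number. -/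
theorem exists_nat_forall_norm_sub_le (hS : ∀ p ∈ S, p.Prime)
    (x : ∀ (p : ℕ) [Fact p.Prime], ℤ_[p]) (N : ∀ (p : ℕ) [Fact p.Prime], ℕ) :
    ∃ r : ℕ, ∀ (p : ℕ) [Fact p.Prime], p ∈ S → ‖(r : ℚ_[p]) - x p‖ ≤ (p : ℝ) ^ (-N p : ℤ) := by
  classical
  let M : ℕ → ℕ := fun p => if h : p.Prime then have : Fact p.Prime := ⟨h⟩; p ^ N p else 1
  let m : ℕ → ℕ := fun p => if h : p.Prime then have : Fact p.Prime := ⟨h⟩; (x p).appr (N p) else 1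
  have hM : ∀ (p : ℕ) [hp : Fact p.Prime], M p = p ^ N p := fun p hp => dif_pos hp.out
  have hm : ∀ (p : ℕ) [hp : Fact p.Prime], m p = (x p).appr (N p) := fun p hp => dif_pos hp.out
  obtain ⟨r, hr⟩ := Nat.chineseRemainderOfFinset m M S
    (fun p hp => by
      have : Fact p.Prime := ⟨hS p hp⟩
      rw [hM]
      exact pow_ne_zero _ (hS p hp).ne_zero)
    (fun p hp q hq hpq => by
      have : Fact p.Prime := ⟨hS p hp⟩
      have : Fact q.Prime := ⟨hS q hq⟩
      simp only [Function.onFun, hM]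
      exact Nat.Coprime.pow _ _ ((Nat.coprime_primes (hS p hp) (hS q hq)).2 hpq))
  refine ⟨r, fun p hp hpS => ?_⟩
  have h1 : ‖((r - (x p).appr (N p) : ℤ) : ℤ_[p])‖ ≤ (p : ℝ) ^ (-N p : ℤ) := by
    rw [PadicInt.norm_int_le_pow_iff_dvd]
    have := (hr p hpS).symm
    rw [hM, hm, Nat.modEq_iff_dvd] at this
    exact_mod_cast this
  have h2 : ‖(((x p).appr (N p) : ℕ) : ℤ_[p]) - x p‖ ≤ (p : ℝ) ^ (-N p : ℤ) := by
    rw [norm_sub_rev, PadicInt.norm_le_pow_iff_mem_span_pow]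
    exact PadicInt.appr_spec _ _
  have h3 : ‖(r : ℤ_[p]) - x p‖ ≤ (p : ℝ) ^ (-N p : ℤ) := by
    have := (PadicInt.nonarchimedean ((r - (x p).appr (N p) : ℤ) : ℤ_[p])
      ((((x p).appr (N p) : ℕ) : ℤ_[p]) - x p)).trans (max_le h1 h2)
    push_cast at this
    rwa [sub_add_sub_cancel] at this
  simpa [PadicInt.norm_def] using h3

theorem Padic.norm_two_sq_gt (p : ℕ) [hp : Fact p.Prime] :
    (p : ℝ) ^ (-3 : ℤ) < ‖(2 : ℚ_[p])‖ ^ 2 := by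
  by_cases h : p = 2
  · subst h
    have : ‖(2 : ℚ_[2])‖ = 2⁻¹ := by simpa using Padic.norm_p (p := 2)
    rw [this]
    norm_num
  · rw [Padic.norm_two_eq_one h, one_pow]
    exact zpow_lt_one_of_neg₀ (by exact_mod_cast hp.out.one_lt) (by decide)

/-- There are integers of the form `q * P`, with `q` a prime outside of `S` and `P` of prescribed
sign and divisible only by primes in `S`, in prescribed `p`-adic square classes for `p ∈ S`. -/
theorem exists_prime_mul_mem_squareClass (hS : ∀ p ∈ S, p.Prime) {ε : ℤ} (hε : IsUnit ε)
    (t : ∀ (p : ℕ) [Fact p.Prime], ℚ_[p]) (ht : ∀ (p : ℕ) [Fact p.Prime], t p ≠ 0) :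
    ∃ (q : ℕ) (P : ℤ), q.Prime ∧ q ∉ S ∧ 0 < ε * P ∧ (∀ p : ℕ, p.Prime → (p : ℤ) ∣ P → p ∈ S) ∧
      ∀ (p : ℕ) [Fact p.Prime], p ∈ S →
        ∃ c : ℚ_[p], c ≠ 0 ∧ ((q * P : ℤ) : ℚ_[p]) = c ^ 2 * t p := by
  classical
  let e : ℕ → ℕ := fun p => if h : p.Prime then
    have : Fact p.Prime := ⟨h⟩; (t p).valuation.natAbs else 1
  have he : ∀ (p : ℕ) [hp : Fact p.Prime], e p = (t p).valuation.natAbs :=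
    fun p hp => dif_pos hp.out
  have hP0 : 0 < ∏ l ∈ S, (l : ℤ) ^ e l :=
    Finset.prod_pos fun l hl => pow_pos (by exact_mod_cast (hS l hl).pos) _
  set P : ℤ := ε * ∏ l ∈ S, (l : ℤ) ^ e l with hP
  have hεε : ε * ε = 1 := by rcases Int.isUnit_iff.1 hε with h | h <;> rw [h] <;> rfl
  have hPne : P ≠ 0 := mul_ne_zero hε.ne_zero hP0.ne'
  have hPval : ∀ (p : ℕ) [Fact p.Prime], p ∈ S → ‖(P : ℚ_[p])‖ = (p : ℝ) ^ (-e p : ℤ) := by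
    intro p hp hpS
    have hu : ¬ (p : ℤ) ∣ ε * ∏ l ∈ S.erase p, (l : ℤ) ^ e l := by
      have hpp := Nat.prime_iff_prime_int.1 hp.out
      rw [hpp.dvd_mul, not_or, hpp.dvd_finsetProd_iff]
      refine ⟨fun h => hpp.not_isUnit (isUnit_of_dvd_unit h hε), ?_⟩
      rintro ⟨l, hl, h⟩
      obtain ⟨hlp, hl⟩ := Finset.mem_erase.1 hl
      exact hp.out.not_intCast_dvd (hS l hl) hlp.symm (hpp.dvd_of_dvd_pow h)
    rw [hP, ← Finset.mul_prod_erase S _ hpS, mul_left_comm, Int.cast_mul, norm_mul,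
      Padic.norm_intCast_eq_one hu, mul_one]
    push_cast
    rw [norm_pow, Padic.norm_p, inv_pow, zpow_neg, zpow_natCast]
  -- the unit part of `P * t p`
  have hunit : ∀ (p : ℕ) [Fact p.Prime], ∃ u : ℤ_[p], p ∈ S →
      ‖u‖ = 1 ∧ ∃ d : ℚ_[p], d ≠ 0 ∧ (u : ℚ_[p]) = d ^ 2 * (P * t p) := by
    intro p hp
    by_cases hpS : p ∈ S
    swap
    · exact ⟨0, fun h => absurd h hpS⟩
    have hp0 : (p : ℝ) ≠ 0 := by exact_mod_cast hp.out.ne_zero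
    obtain ⟨k, hk⟩ : ∃ k : ℤ, (e p : ℤ) + (t p).valuation = 2 * k := by
      rw [he]
      have : Even (((t p).valuation.natAbs : ℤ) + (t p).valuation) := by
        rcases Int.natAbs_eq (t p).valuation with h | h
        · exact ⟨(t p).valuation, by omega⟩
        · exact ⟨0, by omega⟩
      exact this.exists_two_nsmul.imp fun k hk => by simpa using hk
    have hn : ‖((p : ℚ_[p]) ^ (-k)) ^ 2 * (P * t p)‖ = 1 := by
      rw [norm_mul, norm_mul, hPval p hpS, Padic.norm_eq_zpow_neg_valuation (ht p), norm_pow,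
        Padic.norm_p_zpow, neg_neg, ← zpow_natCast, ← zpow_mul, ← zpow_add₀ hp0,
        ← zpow_add₀ hp0]
      convert zpow_zero (p : ℝ) using 2
      push_cast
      linarith
    refine ⟨⟨_, hn.le⟩, fun _ => ⟨hn, (p : ℚ_[p]) ^ (-k),
      zpow_ne_zero _ (by exact_mod_cast hp.out.ne_zero), rfl⟩⟩
  choose u hu using hunit
  obtain ⟨r, hr⟩ := exists_nat_forall_norm_sub_le hS u (fun _ _ => 3)
  have hrcop : r.Coprime (∏ p ∈ S, p ^ 3) := by
    refine Nat.Coprime.prod_right fun p hp => Nat.Coprime.pow_right _ ?_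
    have : Fact p.Prime := ⟨hS p hp⟩
    rw [Nat.coprime_comm, (hS p hp).coprime_iff_not_dvd]
    intro hd
    have h1 : ‖(r : ℚ_[p])‖ < 1 := by
      simpa using Padic.norm_intCast_lt_one_iff (p := p) (k := r) |>.2 (by exact_mod_cast hd)
    have h2 : ‖(r : ℚ_[p]) - u p‖ < 1 := (hr p hp).trans_lt
      (zpow_lt_one_of_neg₀ (by exact_mod_cast (hS p hp).one_lt) (by decide))
    have h3 : ‖(u p : ℚ_[p])‖ < 1 := by
      have := (Padic.nonarchimedean (r : ℚ_[p]) (-((r : ℚ_[p]) - u p))).trans_lt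
        (max_lt h1 (by rwa [norm_neg]))
      simpa using this
    have h4 := (hu p hp).1
    rw [PadicInt.norm_def] at h4
    exact h3.ne h4
  obtain ⟨q, hqgt, hq, hqr⟩ := Nat.forall_exists_prime_gt_and_modEq (S.sup id)
    (Finset.prod_ne_zero_iff.2 fun p hp => pow_ne_zero 3 (hS p hp).ne_zero) hrcop
  refine ⟨q, P, hq, fun h => absurd (Finset.le_sup (f := id) h) (not_le.2 hqgt), ?_, ?_, ?_⟩
  · rw [hP, ← mul_assoc, hεε, one_mul]
    exact hP0
  · intro p hp hd
    have hpp := Nat.prime_iff_prime_int.1 hp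
    rw [hP, hpp.dvd_mul, hpp.dvd_finsetProd_iff] at hd
    rcases hd with h | ⟨l, hl, h⟩
    · exact absurd (isUnit_of_dvd_unit h hε) hpp.not_isUnit
    · by_contra hpS
      exact hp.not_intCast_dvd (hS l hl) (fun h => hpS (h ▸ hl)) (hpp.dvd_of_dvd_pow h)
  · intro p hp hpS
    obtain ⟨hu1, d, hd, hud⟩ := hu p hpS
    rw [PadicInt.norm_def] at hu1
    have hqr' : ‖((q - r : ℤ) : ℚ_[p])‖ ≤ (p : ℝ) ^ (-(3 : ℕ) : ℤ) := by
      rw [Padic.norm_int_le_pow_iff_dvd]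
      have h1 : ((∏ p ∈ S, p ^ 3 : ℕ) : ℤ) ∣ q - r := (Nat.modEq_iff_dvd.1 hqr.symm)
      refine dvd_trans ?_ h1
      exact_mod_cast Finset.dvd_prod_of_mem (fun p => p ^ 3) hpS
    have hqu : ‖(q : ℚ_[p]) - u p‖ ≤ (p : ℝ) ^ (-(3 : ℕ) : ℤ) := by
      have := (Padic.nonarchimedean ((q - r : ℤ) : ℚ_[p]) ((r : ℚ_[p]) - u p)).trans
        (max_le hqr' (hr p hpS))
      push_cast at this
      rw [sub_add_sub_cancel] at this
      exact_mod_cast this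
    have hu0 : (u p : ℚ_[p]) ≠ 0 := norm_pos_iff.1 (by rw [hu1]; exact one_pos)
    obtain ⟨c, hc, hqc⟩ := Padic.exists_sq_mul_of_norm_sub_lt hu0
      (hqu.trans_lt (by rw [hu1, mul_one]; exact_mod_cast Padic.norm_two_sq_gt p))
    refine ⟨c * d * P, by simp [hc, hd, hPne], ?_⟩
    push_cast
    rw [hqc, hud]
    ring

/-- Local-to-global principle for `x ^ 2 = b y ^ 2 + q c z ^ 2`, where no condition is needed
outside of the bad primes. -/
theorem hilbertSolvable_rat_of_local_mem (hS2 : 2 ∈ S) {b c : ℤ} {q : ℕ} (hb0 : b ≠ 0)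
    (hc0 : c ≠ 0) (hq : q.Prime) (hqS : q ∉ S)
    (hb : ∀ p : ℕ, p.Prime → (p : ℤ) ∣ b → p ∈ S) (hc : ∀ p : ℕ, p.Prime → (p : ℤ) ∣ c → p ∈ S)
    (hR : HilbertSolvable (b : ℝ) (q * c : ℤ))
    (h : ∀ (p : ℕ) [Fact p.Prime], p ∈ S → HilbertSolvable (b : ℚ_[p]) (q * c : ℤ)) :
    HilbertSolvable (b : ℚ) (q * c : ℤ) := by
  have hqf : Fact q.Prime := ⟨hq⟩
  have hq2 : q ≠ 2 := fun h => hqS (h ▸ hS2)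
  have hne : ∀ (p : ℕ) [Fact p.Prime], p ≠ q → HilbertSolvable (b : ℚ_[p]) (q * c : ℤ) := by
    intro p hp hpq
    by_cases hpS : p ∈ S
    · exact h p hpS
    · refine .of_not_dvd (fun h : p = 2 => hpS (h ▸ hS2)) (fun hd => hpS (hb p hp.out hd))
        fun hd => ?_
      rcases (Nat.prime_iff_prime_int.1 hp.out).dvd_mul.1 hd with hd | hd
      · exact hp.out.not_intCast_dvd hq hpq hd
      · exact hpS (hc p hp.out hd)
  refine hilbertSolvable_rat_of_local _ _ hb0
    (mul_ne_zero (by exact_mod_cast hq.ne_zero) hc0) hR fun p hp => ?_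
  by_cases hpq : p = q
  · subst hpq
    exact .of_forall_ne hq2 (fun hd => hqS (hb p hq hd)) (fun hd => hqS (hc p hq hd)) hR hne
  · exact hne p hpq

end Approximation

section LowRank

theorem Int.isSquare_of_local {m : ℤ} (hm : m ≠ 0) (hR : IsSquare (m : ℝ))
    (hp : ∀ (p : ℕ) [Fact p.Prime], IsSquare (m : ℚ_[p])) : IsSquare m := by
  obtain ⟨n, rfl⟩ : ∃ n : ℕ, m = n := Int.eq_ofNat_of_zero_le (by exact_mod_cast hR.nonneg)
  have hn : 0 < n := Nat.pos_of_ne_zero (by exact_mod_cast hm)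
  obtain ⟨a, b, ha, hb, rfl, hsq⟩ := Nat.sq_mul_squarefree_of_pos hn
  by_cases ha1 : a = 1
  · exact ⟨b, by rw [ha1]; push_cast; ring⟩
  exfalso
  obtain ⟨p, hpp, c, rfl⟩ := Nat.exists_prime_and_dvd ha1
  have : Fact p.Prime := ⟨hpp⟩
  have hc0 : c ≠ 0 := right_ne_zero_of_mul ha.ne'
  have hc : ¬ p ∣ c := by
    rintro ⟨d, rfl⟩
    exact hpp.not_isUnit (hsq p ⟨d, by ring⟩)
  obtain ⟨r, hr⟩ := hp p
  rw [Int.cast_natCast] at hr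
  have hval := congrArg Padic.valuation hr
  have hr0 : r ≠ 0 := by
    rintro rfl
    rw [mul_zero] at hr
    exact hn.ne' (by exact_mod_cast hr)
  rw [Padic.valuation_natCast, Padic.valuation_mul hr0 hr0, padicValNat.mul (pow_ne_zero 2 hb.ne')
    (mul_ne_zero hpp.ne_zero hc0), padicValNat.mul hpp.ne_zero hc0, padicValNat.pow,
    padicValNat_self, padicValNat.eq_zero_of_not_dvd hc] at hval
  push_cast at hval
  omega

variable {K ι : Type*} [Field K] [DecidableEq ι]

theorem diagIsotropic_pair_iff {i j : ι} (hij : i ≠ j) {a : ι → K} (hi : a i ≠ 0) :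
    DiagIsotropic {i, j} a ↔ IsSquare (-(a i * a j)) := by
  constructor
  · rintro ⟨x, h0, h⟩
    rw [Finset.sum_pair hij] at h
    have hx : x j ≠ 0 := by
      intro hxj
      rw [hxj] at h
      have hxi : x i = 0 := by simpa [hi] using h
      simp [hxi, hxj] at h0
    refine ⟨a i * x i / x j, ?_⟩
    field_simp
    linear_combination -h
  · rintro ⟨r, hr⟩
    refine ⟨Function.update (fun _ => a i) i r, ⟨j, by simp, ?_⟩, ?_⟩
    · rwa [Function.update_of_ne hij.symm]
    · rw [Finset.sum_pair hij, Function.update_self, Function.update_of_ne hij.symm]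
      linear_combination -a i * hr

theorem DiagIsotropic.exists_common_value [CharZero K] {i j k l : ι} (hij : i ≠ j) (hik : i ≠ k)
    (hil : i ≠ l) (hjk : j ≠ k) (hjl : j ≠ l) (hkl : k ≠ l) {a : ι → K} (hi : a i ≠ 0)
    (hj : a j ≠ 0) (hk : a k ≠ 0) (hl : a l ≠ 0) (h : DiagIsotropic {i, j, k, l} a) :
    ∃ t ≠ 0, HilbertSolvable (-(a i * a j)) (a i * t) ∧
      HilbertSolvable (-(a k * a l)) (-(a k) * t) := by
  obtain ⟨x, y, ht, h⟩ := DiagIsotropic.exists_update (i := i) (j := j) (k := k) (by simp)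
    (by simp) (by simp) hij hik hjk (by simp [hi, hj, hk, hl]) h
  refine ⟨_, ht, ⟨a i * x, y, 1, by simp, by ring⟩, ?_⟩
  have he : ({i, j, k, l} : Finset ι).erase j = {k, l, i} := by
    ext m
    simp only [Finset.mem_erase, Finset.mem_insert, Finset.mem_singleton]
    grind
  rw [he, diagIsotropic_triple_iff hkl hik.symm hil.symm
    (by rwa [Function.update_of_ne hik.symm]), Function.update_of_ne hik.symm,
    Function.update_of_ne hil.symm, Function.update_self] at h
  rwa [neg_mul]

theorem DiagIsotropic.of_common_value {i j k l : ι} (hij : i ≠ j) (hik : i ≠ k)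
    (hil : i ≠ l) (hjk : j ≠ k) (hjl : j ≠ l) (hkl : k ≠ l) {a : ι → K} (hi : a i ≠ 0)
    (hk : a k ≠ 0) {t : K} (ht : t ≠ 0)
    (h₁ : HilbertSolvable (-(a i * a j)) (a i * t))
    (h₂ : HilbertSolvable (-(a k * a l)) (-(a k) * t)) : DiagIsotropic {i, j, k, l} a := by
  obtain ⟨x, y, z, h0, h⟩ := h₁
  by_cases hz : z = 0
  · subst hz
    have hy : y ≠ 0 := by
      rintro rfl
      simp at h h0
      exact h0 h
    refine DiagIsotropic.mono (s := {i, j}) (by intro m; simp; tauto)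
      ((diagIsotropic_pair_iff hij hi).2 ⟨x / y, ?_⟩)
    field_simp
    linear_combination -h
  · refine DiagIsotropic.of_update (i := i) (j := j) (t := t) (x := x / (a i * z)) (y := y / z)
      (by simp) (by simp) hij ?_ ht ?_
    · field_simp
      linear_combination -h
    · have he : ({i, j, k, l} : Finset ι).erase j = {k, l, i} := by
        ext m
        simp only [Finset.mem_erase, Finset.mem_insert, Finset.mem_singleton]
        grind
      rw [he, diagIsotropic_triple_iff hkl hik.symm hil.symm
        (by rwa [Function.update_of_ne hik.symm]), Function.update_of_ne hik.symm,
        Function.update_of_ne hil.symm, Function.update_self]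
      rwa [neg_mul] at h₂

theorem HilbertSolvable.mul_right_congr {b c d t T : K} (hd : d ≠ 0) (hT : T = d ^ 2 * t)
    (h : HilbertSolvable b (c * t)) : HilbertSolvable b (c * T) := by
  have := (h.symm.sq_mul hd).symm
  rwa [mul_left_comm, ← hT] at this

theorem exists_badPrimes {α : Type*} (s : Finset α) {a : α → ℤ} (ha : ∀ i ∈ s, a i ≠ 0) :
    ∃ S : Finset ℕ, (∀ p ∈ S, p.Prime) ∧ 2 ∈ S ∧
      ∀ i ∈ s, ∀ p : ℕ, p.Prime → (p : ℤ) ∣ a i → p ∈ S := by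
  refine ⟨insert 2 (∏ i ∈ s, a i).natAbs.primeFactors, fun p hp => ?_, by simp,
    fun i hi p hp hpa => ?_⟩
  · rcases Finset.mem_insert.1 hp with rfl | hp
    · exact Nat.prime_two
    · exact Nat.prime_of_mem_primeFactors hp
  · refine Finset.mem_insert_of_mem (Nat.mem_primeFactors.2 ⟨hp, ?_, ?_⟩)
    · exact Int.natCast_dvd.1 (hpa.trans (Finset.dvd_prod_of_mem a hi))
    · exact Int.natAbs_ne_zero.2 (Finset.prod_ne_zero_iff.2 ha)

theorem DiagIsotropic.rat_of_local_pair {i j : ι} (hij : i ≠ j) {a : ι → ℤ} (hi : a i ≠ 0)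
    (hj : a j ≠ 0) (hR : DiagIsotropic {i, j} fun m => (a m : ℝ))
    (hp : ∀ (p : ℕ) [Fact p.Prime], DiagIsotropic {i, j} fun m => (a m : ℚ_[p])) :
    DiagIsotropic {i, j} fun m => (a m : ℚ) := by
  rw [diagIsotropic_pair_iff hij (by exact_mod_cast hi)] at hR ⊢
  have := Int.isSquare_of_local (neg_ne_zero.2 (mul_ne_zero hi hj)) (by exact_mod_cast hR)
    fun p _ => by
      have := (diagIsotropic_pair_iff hij (by exact_mod_cast hi)).1 (hp p)
      exact_mod_cast this
  have hQ := this.map (Int.castRingHom ℚ)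
  rw [eq_intCast] at hQ
  push_cast at hQ
  exact hQ

theorem DiagIsotropic.rat_of_local_triple {i j k : ι} (hij : i ≠ j) (hik : i ≠ k) (hjk : j ≠ k)
    {a : ι → ℤ} (hi : a i ≠ 0) (hj : a j ≠ 0) (hk : a k ≠ 0)
    (hR : DiagIsotropic {i, j, k} fun m => (a m : ℝ))
    (hp : ∀ (p : ℕ) [Fact p.Prime], DiagIsotropic {i, j, k} fun m => (a m : ℚ_[p])) :
    DiagIsotropic {i, j, k} fun m => (a m : ℚ) := by
  rw [diagIsotropic_triple_iff hij hik hjk (by exact_mod_cast hi)] at hR ⊢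
  have := hilbertSolvable_rat_of_local (-(a i * a j)) (-(a i * a k))
    (neg_ne_zero.2 (mul_ne_zero hi hj)) (neg_ne_zero.2 (mul_ne_zero hi hk)) (by exact_mod_cast hR)
    fun p _ => by
      have := (diagIsotropic_triple_iff hij hik hjk (by exact_mod_cast hi)).1 (hp p)
      exact_mod_cast this
  exact_mod_cast this

theorem DiagIsotropic.rat_of_local_quadruple {i j k l : ι} (hij : i ≠ j) (hik : i ≠ k)
    (hil : i ≠ l) (hjk : j ≠ k) (hjl : j ≠ l) (hkl : k ≠ l)
    {a : ι → ℤ} (ha : ∀ m ∈ ({i, j, k, l} : Finset ι), a m ≠ 0)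
    (hR : DiagIsotropic {i, j, k, l} fun m => (a m : ℝ))
    (hp : ∀ (p : ℕ) [Fact p.Prime], DiagIsotropic {i, j, k, l} fun m => (a m : ℚ_[p])) :
    DiagIsotropic {i, j, k, l} fun m => (a m : ℚ) := by
  obtain ⟨S, hS, hS2, hbad⟩ := exists_badPrimes _ ha
  have hi : a i ≠ 0 := ha i (by simp)
  have hj : a j ≠ 0 := ha j (by simp)
  have hk : a k ≠ 0 := ha k (by simp)
  have hl : a l ≠ 0 := ha l (by simp)
  obtain ⟨τ, hτ, hτ₁, hτ₂⟩ := hR.exists_common_value hij hik hil hjk hjl hkl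
    (by exact_mod_cast hi) (by exact_mod_cast hj) (by exact_mod_cast hk) (by exact_mod_cast hl)
  choose t ht ht₁ ht₂ using fun (p : ℕ) [Fact p.Prime] =>
    (hp p).exists_common_value hij hik hil hjk hjl hkl
      (by exact_mod_cast hi) (by exact_mod_cast hj) (by exact_mod_cast hk) (by exact_mod_cast hl)
  obtain ⟨ε, hε, hετ⟩ : ∃ ε : ℤ, IsUnit ε ∧ 0 < (ε : ℝ) * τ := by
    rcases hτ.lt_or_gt with h | h
    · exact ⟨-1, by decide, by simpa using h⟩
    · exact ⟨1, by decide, by simpa using h⟩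
  obtain ⟨q, P, hq, hqS, hεP, hPS, hT⟩ := exists_prime_mul_mem_squareClass hS hε t ht
  have hP0 : P ≠ 0 := right_ne_zero_of_mul hεP.ne'
  have hq0 : (q : ℤ) ≠ 0 := by exact_mod_cast hq.ne_zero
  obtain ⟨d, hd, hdT⟩ : ∃ d : ℝ, d ≠ 0 ∧ ((q * P : ℤ) : ℝ) = d ^ 2 * τ := by
    have hpos : 0 < ((q * P : ℤ) : ℝ) / τ := by
      have h1 : 0 < (ε : ℝ) * (q * P : ℤ) := by
        have : 0 < ε * (q * P) := by
          rw [mul_left_comm]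
          exact mul_pos (by exact_mod_cast hq.pos) hεP
        exact_mod_cast this
      have h2 := div_pos h1 hετ
      rwa [mul_div_mul_left _ _ (by exact_mod_cast hε.ne_zero)] at h2
    refine ⟨√(((q * P : ℤ) : ℝ) / τ), (Real.sqrt_pos.2 hpos).ne', ?_⟩
    rw [Real.sq_sqrt hpos.le, div_mul_cancel₀ _ hτ]
  have key : ∀ b c : ℤ, b ≠ 0 → c ≠ 0 → (∀ p : ℕ, p.Prime → (p : ℤ) ∣ b → p ∈ S) →
      (∀ p : ℕ, p.Prime → (p : ℤ) ∣ c → p ∈ S) → HilbertSolvable (b : ℝ) (c * τ) →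
      (∀ (p : ℕ) [Fact p.Prime], HilbertSolvable (b : ℚ_[p]) (c * t p)) →
      HilbertSolvable (b : ℚ) (c * (q * P : ℤ)) := by
    intro b c hb0 hc0 hb hc hbR hbp
    have := hilbertSolvable_rat_of_local_mem (c := c * P) hS2 hb0 (mul_ne_zero hc0 hP0) hq hqS hb
      (fun p hp hd => (Nat.prime_iff_prime_int.1 hp).dvd_mul.1 hd |>.elim (hc p hp) (hPS p hp))
      (by
        rw [mul_left_comm, Int.cast_mul]
        exact hbR.mul_right_congr hd hdT)
      (fun p _ hpS => by
        obtain ⟨e, he, heT⟩ := hT p hpS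
        rw [mul_left_comm, Int.cast_mul]
        exact (hbp p).mul_right_congr he heT)
    rwa [mul_left_comm, Int.cast_mul] at this
  have hmul : ∀ m ∈ ({i, j, k, l} : Finset ι), ∀ n ∈ ({i, j, k, l} : Finset ι), ∀ p : ℕ, p.Prime →
      (p : ℤ) ∣ -(a m * a n) → p ∈ S := fun m hm n hn p hp hd =>
    (Nat.prime_iff_prime_int.1 hp).dvd_mul.1 (dvd_neg.1 hd) |>.elim (hbad m hm p hp)
      (hbad n hn p hp)
  refine DiagIsotropic.of_common_value (t := ((q * P : ℤ) : ℚ)) hij hik hil hjk hjl hkl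
    (by exact_mod_cast hi) (by exact_mod_cast hk)
    (by exact_mod_cast mul_ne_zero hq0 hP0) ?_ ?_
  · have := key (-(a i * a j)) (a i) (neg_ne_zero.2 (mul_ne_zero hi hj)) hi
      (hmul i (by simp) j (by simp)) (hbad i (by simp)) (by push_cast; exact hτ₁)
      (fun p _ => by push_cast; exact ht₁ p)
    rwa [Int.cast_neg, Int.cast_mul] at this
  · have := key (-(a k * a l)) (-a k) (neg_ne_zero.2 (mul_ne_zero hk hl)) (neg_ne_zero.2 hk)
      (hmul k (by simp) l (by simp)) (fun p hp hd => hbad k (by simp) p hp (dvd_neg.1 hd))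
      (by push_cast; exact hτ₂) (fun p _ => by push_cast; exact ht₂ p)
    rwa [Int.cast_neg, Int.cast_neg, Int.cast_mul] at this

end LowRank

section HigherRank

theorem Padic.exists_nat_norm_pow_mul_le_one {p : ℕ} [hp : Fact p.Prime] (x y : ℚ_[p]) :
    ∃ k : ℕ, ‖(p : ℚ_[p]) ^ k * x‖ ≤ 1 ∧ ‖(p : ℚ_[p]) ^ k * y‖ ≤ 1 := by
  obtain ⟨k, hk⟩ := PadicInt.exists_pow_neg_lt p (ε := (max ‖x‖ ‖y‖ + 1)⁻¹) (by positivity)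
  have h : ∀ z : ℚ_[p], ‖z‖ ≤ max ‖x‖ ‖y‖ → ‖(p : ℚ_[p]) ^ k * z‖ ≤ 1 := by
    intro z hz
    rw [norm_mul, norm_pow, Padic.norm_p, inv_pow, ← zpow_natCast, ← zpow_neg]
    have h0 : 0 < max ‖x‖ ‖y‖ + 1 := by positivity
    calc (p : ℝ) ^ (-(k : ℤ)) * ‖z‖ ≤ (max ‖x‖ ‖y‖ + 1)⁻¹ * (max ‖x‖ ‖y‖ + 1) := by
          gcongr
          linarith
      _ = 1 := inv_mul_cancel₀ h0.ne'
  exact ⟨k, h x (le_max_left _ _), h y (le_max_right _ _)⟩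

theorem Padic.norm_mul_sq_sub_le {p : ℕ} [Fact p.Prime] {a : ℤ} {r : ℕ} {x : ℤ_[p]} {ε : ℝ}
    (h : ‖(r : ℚ_[p]) - x‖ ≤ ε) : ‖(a : ℚ_[p]) * r ^ 2 - a * (x : ℚ_[p]) ^ 2‖ ≤ ε := by
  have h1 : ‖(r : ℚ_[p]) + x‖ ≤ 1 := by
    refine (Padic.nonarchimedean _ _).trans (max_le ?_ x.2)
    simpa using Padic.norm_int_le_one (p := p) r
  calc ‖(a : ℚ_[p]) * r ^ 2 - a * (x : ℚ_[p]) ^ 2‖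
      = ‖(a : ℚ_[p])‖ * (‖(r : ℚ_[p]) + x‖ * ‖(r : ℚ_[p]) - x‖) := by
        rw [← norm_mul, ← norm_mul]
        congr 1
        ring
    _ ≤ 1 * (1 * ε) := by
        gcongr
        exact Padic.norm_int_le_one a
    _ = ε := by ring

/-- Simultaneous approximation of values of a binary form, up to squares. -/
theorem exists_nat_binary_mem_squareClass {S : Finset ℕ} (hS : ∀ p ∈ S, p.Prime) (a b : ℤ)
    (x y : ∀ (p : ℕ) [Fact p.Prime], ℚ_[p])
    (h0 : ∀ (p : ℕ) [Fact p.Prime], (a : ℚ_[p]) * x p ^ 2 + b * y p ^ 2 ≠ 0) :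
    ∃ X Y : ℕ, ∀ (p : ℕ) [Fact p.Prime], p ∈ S → ∃ c : ℚ_[p], c ≠ 0 ∧
      ((a * X ^ 2 + b * Y ^ 2 : ℤ) : ℚ_[p]) = c ^ 2 * (a * x p ^ 2 + b * y p ^ 2) := by
  choose k hkx hky using fun (p : ℕ) [Fact p.Prime] =>
    Padic.exists_nat_norm_pow_mul_le_one (x p) (y p)
  have ht : ∀ (p : ℕ) [Fact p.Prime],
      ((p : ℚ_[p]) ^ k p) ^ 2 * (a * x p ^ 2 + b * y p ^ 2) ≠ 0 := fun p hp =>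
    mul_ne_zero (pow_ne_zero _ (pow_ne_zero _ (by exact_mod_cast hp.out.ne_zero))) (h0 p)
  choose N hN using fun (p : ℕ) [hp : Fact p.Prime] => PadicInt.exists_pow_neg_lt p
    (ε := ‖(2 : ℚ_[p])‖ ^ 2 * ‖((p : ℚ_[p]) ^ k p) ^ 2 * (a * x p ^ 2 + b * y p ^ 2)‖)
    (mul_pos (pow_pos (norm_pos_iff.2 two_ne_zero) 2) (norm_pos_iff.2 (ht p)))
  obtain ⟨X, hX⟩ := exists_nat_forall_norm_sub_le hS (fun p _ => ⟨_, hkx p⟩) N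
  obtain ⟨Y, hY⟩ := exists_nat_forall_norm_sub_le hS (fun p _ => ⟨_, hky p⟩) N
  refine ⟨X, Y, fun p hp hpS => ?_⟩
  obtain ⟨c, hc, hcT⟩ := Padic.exists_sq_mul_of_norm_sub_lt
    (u := ((a * X ^ 2 + b * Y ^ 2 : ℤ) : ℚ_[p])) (ht p) (by
      refine lt_of_le_of_lt ?_ (hN p)
      have hs := (Padic.nonarchimedean _ _).trans
        (max_le (Padic.norm_mul_sq_sub_le (a := a) (hX p hpS))
          (Padic.norm_mul_sq_sub_le (a := b) (hY p hpS)))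
      convert hs using 2
      push_cast
      ring)
  refine ⟨c * (p : ℚ_[p]) ^ k p,
    mul_ne_zero hc (pow_ne_zero _ (by exact_mod_cast hp.out.ne_zero)), ?_⟩
  rw [hcT]
  ring

variable {ι : Type*}

theorem DiagIsotropic.exists_mul_neg {s : Finset ι} {a : ι → ℝ} (ha : ∀ i ∈ s, a i ≠ 0)
    (h : DiagIsotropic s a) : ∃ i ∈ s, ∃ k ∈ s, 0 < a i ∧ a k < 0 := by
  obtain ⟨x, ⟨m, hm, hx⟩, h⟩ := h
  have hxm : 0 < x m ^ 2 := by positivity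
  have hpos : ∃ i ∈ s, 0 < a i := by
    by_contra! hneg
    have : ∑ i ∈ s, a i * x i ^ 2 < 0 := Finset.sum_neg'
      (fun i hi => mul_nonpos_of_nonpos_of_nonneg (hneg i hi) (sq_nonneg _))
      ⟨m, hm, mul_neg_of_neg_of_pos (lt_of_le_of_ne (hneg m hm) (ha m hm)) hxm⟩
    exact this.ne h
  have hneg : ∃ k ∈ s, a k < 0 := by
    by_contra! hpos
    have : 0 < ∑ i ∈ s, a i * x i ^ 2 := Finset.sum_pos'
      (fun i hi => mul_nonneg (hpos i hi) (sq_nonneg _))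
      ⟨m, hm, mul_pos (lt_of_le_of_ne (hpos m hm) (ha m hm).symm) hxm⟩
    exact this.ne' h
  obtain ⟨i, hi, hi'⟩ := hpos
  obtain ⟨k, hk, hk'⟩ := hneg
  exact ⟨i, hi, k, hk, hi', hk'⟩

theorem diagIsotropic_num_mul_den_iff {K : Type*} [Field K] [CharZero K] (s : Finset ι)
    (a : ι → ℚ) : (DiagIsotropic s fun i => (((a i).num * (a i).den : ℤ) : K)) ↔
      DiagIsotropic s fun i => (a i : K) := by
  have hd : ∀ i, ((a i).den : K) ≠ 0 := fun i => by exact_mod_cast (a i).den_ne_zero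
  have h : ∀ i, (((a i).num * (a i).den : ℤ) : K) = ((a i).den : K) ^ 2 * (a i : K) := by
    intro i
    have := hd i
    rw [Rat.cast_def]
    push_cast
    field_simp
  constructor
  · exact .of_sq_mul (fun i _ => hd i) (fun i _ => h i)
  · refine .of_sq_mul (c := fun i => ((a i).den : K)⁻¹) (fun i _ => inv_ne_zero (hd i))
      (fun i _ => ?_)
    rw [h, ← mul_assoc, ← mul_pow, inv_mul_cancel₀ (hd i), one_pow, one_mul]

theorem diagIsotropic_univ_iff {K : Type*} [Field K] [Fintype ι] (a : ι → K) :
    DiagIsotropic Finset.univ a ↔ ∃ x : ι → K, x ≠ 0 ∧ ∑ i, a i * x i ^ 2 = 0 := by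
  simp [DiagIsotropic, Function.ne_iff]

theorem DiagIsotropic.map_rat {K : Type*} [Field K] [CharZero K] {s : Finset ι} {a : ι → ℚ}
    (h : DiagIsotropic s a) : DiagIsotropic s fun i => (a i : K) := by
  obtain ⟨x, ⟨i, hi, hx⟩, h⟩ := h
  refine ⟨fun i => x i, ⟨i, hi, Rat.cast_ne_zero.2 hx⟩, ?_⟩
  simpa using congrArg (Rat.cast (K := K)) h

variable [DecidableEq ι]

theorem DiagIsotropic.of_mul_neg {s : Finset ι} {i k : ι} (hi : i ∈ s) (hk : k ∈ s) {a : ι → ℝ}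
    (h : a i * a k < 0) : DiagIsotropic s a := by
  have hik : i ≠ k := by
    rintro rfl
    exact absurd h (not_lt.2 (mul_self_nonneg _))
  refine DiagIsotropic.mono (s := {i, k}) ?_ ((diagIsotropic_pair_iff hik ?_).2 ?_)
  · simp [Finset.insert_subset_iff, hi, hk]
  · exact left_ne_zero_of_mul h.ne
  · exact ⟨√(-(a i * a k)), (Real.mul_self_sqrt (by linarith)).symm⟩

theorem DiagIsotropic.exists_mul_pos_mul_neg {s : Finset ι} (hs : 2 < s.card) {a : ι → ℝ}
    (ha : ∀ i ∈ s, a i ≠ 0) (h : DiagIsotropic s a) :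
    ∃ i ∈ s, ∃ j ∈ s, ∃ k ∈ s, i ≠ j ∧ 0 < a i * a j ∧ a i * a k < 0 := by
  obtain ⟨i, hi, k, hk, hi0, hk0⟩ := h.exists_mul_neg ha
  obtain ⟨m, hm, hmik⟩ := Finset.exists_mem_notMem_of_card_lt_card
    (s := {i, k}) (t := s) (lt_of_le_of_lt Finset.card_le_two hs)
  simp only [Finset.mem_insert, Finset.mem_singleton, not_or] at hmik
  rcases (ha m hm).lt_or_gt with h0 | h0
  · exact ⟨k, hk, m, hm, i, hi, Ne.symm hmik.2, mul_pos_of_neg_of_neg hk0 h0,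
      mul_neg_of_neg_of_pos hk0 hi0⟩
  · exact ⟨i, hi, m, hm, k, hk, Ne.symm hmik.1, mul_pos hi0 h0, mul_neg_of_pos_of_neg hi0 hk0⟩

theorem DiagIsotropic.of_not_dvd {p : ℕ} [hp : Fact p.Prime] (hp2 : p ≠ 2) {s : Finset ι}
    (hs : 2 < s.card) {a : ι → ℤ} (ha : ∀ i ∈ s, ¬ (p : ℤ) ∣ a i) :
    DiagIsotropic s fun i => (a i : ℚ_[p]) := by
  obtain ⟨i, hi, j, hj, k, hk, hij, hik, hjk⟩ := Finset.two_lt_card.1 hs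
  have hpp := Nat.prime_iff_prime_int.1 hp.out
  have hmul : ∀ m ∈ s, ¬ (p : ℤ) ∣ -(a i * a m) := fun m hm hd =>
    (hpp.dvd_mul.1 (dvd_neg.1 hd)).elim (ha i hi) (ha m hm)
  refine DiagIsotropic.mono (s := {i, j, k}) ?_ ((diagIsotropic_triple_iff hij hik hjk ?_).2 ?_)
  · simp [Finset.insert_subset_iff, hi, hj, hk]
  · exact_mod_cast fun h : a i = 0 => ha i hi (h ▸ dvd_zero _)
  · exact_mod_cast HilbertSolvable.of_not_dvd hp2 (hmul j hj) (hmul k hk)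

theorem Function.intCast_update {K : Type*} [Field K] (a : ι → ℤ) (i : ι) (t : ℤ) :
    (fun l => (Function.update a i t l : K)) = Function.update (fun l => (a l : K)) i (t : K) := by
  ext l
  by_cases hl : l = i
  · subst hl
    simp
  · simp [Function.update_of_ne hl]

/-- The inductive step of the Hasse–Minkowski theorem in rank at least five. -/
theorem exists_update_of_local {s : Finset ι} (hs : 4 < s.card) {a : ι → ℤ}
    (ha : ∀ i ∈ s, a i ≠ 0) (hR : DiagIsotropic s fun i => (a i : ℝ))
    (hp : ∀ (p : ℕ) [Fact p.Prime], DiagIsotropic s fun i => (a i : ℚ_[p])) :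
    ∃ i ∈ s, ∃ j ∈ s, ∃ X Y : ℤ, i ≠ j ∧ a i * X ^ 2 + a j * Y ^ 2 ≠ 0 ∧
      (DiagIsotropic (s.erase j) fun l =>
        (Function.update a i (a i * X ^ 2 + a j * Y ^ 2) l : ℝ)) ∧
      ∀ (p : ℕ) [Fact p.Prime], DiagIsotropic (s.erase j) fun l =>
        (Function.update a i (a i * X ^ 2 + a j * Y ^ 2) l : ℚ_[p]) := by
  obtain ⟨i, hi, j, hj, k, hk, hij, hpos, hneg⟩ :=
    hR.exists_mul_pos_mul_neg (by omega) (by exact_mod_cast ha)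
  have hposZ : 0 < a i * a j := by exact_mod_cast hpos
  have hnegZ : a i * a k < 0 := by exact_mod_cast hneg
  have hik : i ≠ k := by
    rintro rfl
    exact absurd hnegZ (not_lt.2 (mul_self_nonneg _))
  have hjk : j ≠ k := by
    rintro rfl
    exact absurd hnegZ hposZ.not_gt
  obtain ⟨S, hS, hS2, hbad⟩ := exists_badPrimes s ha
  choose x y hxy hloc using fun (p : ℕ) [Fact p.Prime] =>
    (hp p).exists_update hi hj hk hij hik hjk (by exact_mod_cast ha)
  obtain ⟨X, Y, hXY⟩ := exists_nat_binary_mem_squareClass hS (a i) (a j) x y hxy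
  set t : ℤ := a i * X ^ 2 + a j * Y ^ 2 with ht
  have ht0 : t ≠ 0 := by
    have : Fact (Nat.Prime 2) := ⟨Nat.prime_two⟩
    obtain ⟨c, hc, hct⟩ := hXY 2 hS2
    intro h0
    rw [h0, Int.cast_zero] at hct
    exact mul_ne_zero (pow_ne_zero 2 hc) (hxy 2) hct.symm
  refine ⟨i, hi, j, hj, X, Y, hij, ht0, ?_, fun p hpp => ?_⟩
  · refine DiagIsotropic.of_mul_neg (i := i) (k := k) (Finset.mem_erase.2 ⟨hij, hi⟩)
      (Finset.mem_erase.2 ⟨hjk.symm, hk⟩) ?_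
    rw [Function.update_self, Function.update_of_ne hik.symm]
    have hit : 0 < a i * t := by
      refine lt_of_le_of_ne ?_ (mul_ne_zero (ha i hi) ht0).symm
      have : a i * t = (a i * X) ^ 2 + a i * a j * Y ^ 2 := by
        rw [ht]
        ring
      rw [this]
      positivity
    have : t * a k < 0 := by
      have h1 : (a i * t) * (a i * a k) < 0 := mul_neg_of_pos_of_neg hit hnegZ
      have h2 : (a i * t) * (a i * a k) = (a i) ^ 2 * (t * a k) := by ring
      rw [h2] at h1
      exact neg_of_mul_neg_right h1 (sq_nonneg _)
    exact_mod_cast this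
  · by_cases hpS : p ∈ S
    · obtain ⟨c, hc, hct⟩ := hXY p hpS
      rw [Function.intCast_update]
      refine (hloc p).of_sq_mul (c := Function.update (fun _ => 1) i c⁻¹) (fun l _ => ?_)
        (fun l _ => ?_)
      · by_cases hl : l = i
        · subst hl
          simpa using hc
        · simp [Function.update_of_ne hl]
      · by_cases hl : l = i
        · subst hl
          simp only [Function.update_self]
          rw [hct, ← mul_assoc, ← mul_pow, inv_mul_cancel₀ hc, one_pow, one_mul]
        · simp [Function.update_of_ne hl]
    · refine DiagIsotropic.mono (s := (s.erase j).erase i) (Finset.erase_subset _ _)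
        (.of_not_dvd (fun h : p = 2 => hpS (h ▸ hS2)) ?_ fun l hl hd => ?_)
      · rw [Finset.card_erase_of_mem (Finset.mem_erase.2 ⟨hij, hi⟩), Finset.card_erase_of_mem hj]
        omega
      · obtain ⟨hli, hl⟩ := Finset.mem_erase.1 hl
        rw [Function.update_of_ne hli] at hd
        exact hpS (hbad l (Finset.mem_of_mem_erase hl) p hpp.out hd)

/-- The Hasse–Minkowski theorem for diagonal forms with integral coefficients. -/
theorem DiagIsotropic.rat_of_local (s : Finset ι) (a : ι → ℤ) (ha : ∀ i ∈ s, a i ≠ 0)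
    (hR : DiagIsotropic s fun i => (a i : ℝ))
    (hp : ∀ (p : ℕ) [Fact p.Prime], DiagIsotropic s fun i => (a i : ℚ_[p])) :
    DiagIsotropic s fun i => (a i : ℚ) := by
  induction hn : s.card using Nat.strong_induction_on generalizing s a with
  | _ n ih =>
    subst hn
    obtain h4 | h4 := lt_or_ge 4 s.card
    · obtain ⟨i, hi, j, hj, X, Y, hij, ht0, hR', hp'⟩ := exists_update_of_local h4 ha hR hp
      have := ih _ (Finset.card_erase_lt_of_mem hj) (s.erase j) _ (fun l hl => by
        by_cases hli : l = i
        · subst hli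
          rwa [Function.update_self]
        · rw [Function.update_of_ne hli]
          exact ha l (Finset.mem_of_mem_erase hl)) hR' hp' rfl
      rw [Function.intCast_update] at this
      exact this.of_update (x := (X : ℚ)) (y := (Y : ℚ)) hi hj hij (by push_cast; rfl)
        (by exact_mod_cast ht0)
    · have h1 : 1 < s.card := by
        obtain ⟨i, hi, k, hk, hi0, hk0⟩ := hR.exists_mul_neg (by exact_mod_cast ha)
        refine Finset.one_lt_card.2 ⟨i, hi, k, hk, ?_⟩
        rintro rfl
        exact hi0.not_gt hk0
      obtain h | h | h : s.card = 2 ∨ s.card = 3 ∨ s.card = 4 := by omega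
      · obtain ⟨i, j, hij, rfl⟩ := Finset.card_eq_two.1 h
        exact rat_of_local_pair hij (ha i (by simp)) (ha j (by simp)) hR hp
      · obtain ⟨i, j, k, hij, hik, hjk, rfl⟩ := Finset.card_eq_three.1 h
        exact rat_of_local_triple hij hik hjk (ha i (by simp)) (ha j (by simp)) (ha k (by simp))
          hR hp
      · obtain ⟨i, t, hit, rfl, ht⟩ := Finset.card_eq_succ.1 h
        obtain ⟨j, k, l, hjk, hjl, hkl, rfl⟩ := Finset.card_eq_three.1 ht
        simp only [Finset.mem_insert, Finset.mem_singleton, not_or] at hit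
        exact rat_of_local_quadruple hit.1 hit.2.1 hit.2.2 hjk hjl hkl ha hR hp

end HigherRank

/-- Hasse–Minkowski principle over ℚ for diagonal quadratic forms: a nondegenerate
diagonal quadratic form over ℚ is isotropic over ℚ if and only if it is isotropic
over ℝ and over ℚ_p for every prime p. -/
theorem hasse_minkowski_diagonal
    (n : ℕ) (hn : 1 ≤ n) (a : Fin n → ℚ) (ha : ∀ i, a i ≠ 0) :
    (∃ x : Fin n → ℚ, x ≠ 0 ∧ ∑ i, a i * (x i) ^ 2 = 0) ↔
      ((∃ x : Fin n → ℝ, x ≠ 0 ∧ ∑ i, (a i : ℝ) * (x i) ^ 2 = 0) ∧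
        ∀ (p : ℕ) [Fact p.Prime],
          ∃ x : Fin n → ℚ_[p], x ≠ 0 ∧ ∑ i, (a i : ℚ_[p]) * (x i) ^ 2 = 0) := by
  simp only [← diagIsotropic_univ_iff]
  refine ⟨fun h => ⟨h.map_rat, fun p _ => h.map_rat⟩, fun ⟨hR, hp⟩ => ?_⟩
  have := DiagIsotropic.rat_of_local Finset.univ (fun i => (a i).num * (a i).den)
    (fun i _ => mul_ne_zero (Rat.num_ne_zero.2 (ha i)) (by exact_mod_cast (a i).den_ne_zero))
    ((diagIsotropic_num_mul_den_iff _ a).2 hR)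
    (fun p _ => (diagIsotropic_num_mul_den_iff _ a).2 (hp p))
  simpa using (diagIsotropic_num_mul_den_iff _ a).1 this
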